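/- arXiv:2605.11025 — 5 statements merged into one kernel-verified Lean document; each statement's English description precedes it below -/
import Mathlib

section
/- Let G be a simple graph on vertex set V, and let A, B ⊆ V with A ∪ B = V be such that every edge of G has both endpoints in A or both endpoints in B. Let r ∈ ℕ, and let c₁ : A → Fin r and c₂ : B → Fin r be proper colorings of the induced subgraphs G[A] and G[B], respectively, such that for all u, v ∈ A ∩ B, c₁(u) = c₁(v) if and only if c₂(u) = c₂(v). Then G admits a proper coloring c : V → Fin r with c(u) = c₁(u) for every u ∈ A. In particular, G is r-colorable. -/
/-- **Gluing proper colorings along a separator.** Let `G` be a simple graph on `V`,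
and let `A, B ⊆ V` with `A ∪ B = V` be such that every edge of `G` lies within `A` or
within `B`.  If `c₁` and `c₂` are proper `r`-colorings of the induced subgraphs `G[A]`
and `G[B]` inducing the same partition on `A ∩ B`, then `G` admits a proper `r`-coloring
extending `c₁`; in particular `G` is `r`-colorable. -/
theorem stmt_5 {V : Type*} (G : SimpleGraph V) (A B : Set V)
    (hcover : A ∪ B = Set.univ)
    (hedges : ∀ u v : V, G.Adj u v → (u ∈ A ∧ v ∈ A) ∨ (u ∈ B ∧ v ∈ B))
    (r : ℕ) (c₁ : A → Fin r) (c₂ : B → Fin r)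
    (hc₁ : ∀ u v : A, G.Adj u.val v.val → c₁ u ≠ c₁ v)
    (hc₂ : ∀ u v : B, G.Adj u.val v.val → c₂ u ≠ c₂ v)
    (hagree : ∀ (u v : V) (huA : u ∈ A) (huB : u ∈ B) (hvA : v ∈ A) (hvB : v ∈ B),
      c₁ ⟨u, huA⟩ = c₁ ⟨v, hvA⟩ ↔ c₂ ⟨u, huB⟩ = c₂ ⟨v, hvB⟩) :
    (∃ c : V → Fin r, (∀ u v : V, G.Adj u v → c u ≠ c v) ∧
      ∀ (u : V) (hu : u ∈ A), c u = c₁ ⟨u, hu⟩) ∧ G.Colorable r := by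
  classical
  have hσ : ∃ g : Fin r ≃ (Finset.univ : Finset (Fin r)),
      ∀ (u : V) (huA : u ∈ A) (huB : u ∈ B), (g (c₂ ⟨u, huB⟩) : Fin r) = c₁ ⟨u, huA⟩ := by
    let P : Fin r → Fin r → Prop := fun x y =>
      ∃ (u : V) (huA : u ∈ A) (huB : u ∈ B), c₂ ⟨u, huB⟩ = x ∧ c₁ ⟨u, huA⟩ = y
    let f : Fin r → Fin r := fun x => if h : ∃ y, P x y then h.choose else x
    have hf : ∀ x, (∃ y, P x y) → P x (f x) := by
      intro x h
      simp only [f, dif_pos h]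
      exact h.choose_spec
    obtain ⟨g, hg⟩ := Finset.exists_equiv_extend_of_card_eq
      (α := Fin r) (β := Fin r) (t := Finset.univ) (by simp)
      (s := Finset.univ.filter fun x => ∃ y, P x y) (f := f) (Finset.subset_univ _) (by
        intro x hx y hy hxy
        obtain ⟨u, huA, huB, h1, h2⟩ := hf x (by simpa using hx)
        obtain ⟨v, hvA, hvB, h3, h4⟩ := hf y (by simpa using hy)
        rw [← h1, ← h3]
        exact (hagree u v huA huB hvA hvB).1 (by rw [h2, h4, hxy]))
    refine ⟨g, fun u huA huB => ?_⟩
    have hex : ∃ y, P (c₂ ⟨u, huB⟩) y := ⟨_, u, huA, huB, rfl, rfl⟩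
    rw [hg _ (by simpa using hex)]
    obtain ⟨v, hvA, hvB, h3, h4⟩ := hf _ hex
    rw [← h4]
    exact (hagree v u hvA hvB huA huB).2 h3
  obtain ⟨g, hg⟩ := hσ
  have hB : ∀ u, u ∉ A → u ∈ B := fun u hu =>
    ((Set.mem_union _ _ _).1 (hcover ▸ Set.mem_univ u)).resolve_left hu
  let c : V → Fin r := fun u => if h : u ∈ A then c₁ ⟨u, h⟩ else (g (c₂ ⟨u, hB u h⟩) : Fin r)
  have hcA : ∀ (u : V) (hu : u ∈ A), c u = c₁ ⟨u, hu⟩ := fun u hu => dif_pos hu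
  have hcB : ∀ (u : V) (hu : u ∈ B), c u = (g (c₂ ⟨u, hu⟩) : Fin r) := by
    intro u hu
    by_cases h : u ∈ A
    · rw [hcA u h, hg u h hu]
    · exact dif_neg h
  have hc : ∀ u v : V, G.Adj u v → c u ≠ c v := by
    intro u v huv
    rcases hedges u v huv with ⟨hu, hv⟩ | ⟨hu, hv⟩
    · rw [hcA u hu, hcA v hv]
      exact hc₁ ⟨u, hu⟩ ⟨v, hv⟩ huv
    · rw [hcB u hu, hcB v hv]
      exact fun h => hc₂ ⟨u, hu⟩ ⟨v, hv⟩ huv (g.injective (Subtype.ext h))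
  exact ⟨⟨c, hc, hcA⟩, ⟨SimpleGraph.Coloring.mk c (fun {u v} h => hc u v h)⟩⟩
end

section
/- Every finite simple triangle-free graph G that admits a path decomposition of width at most 5 satisfies χ(G) ≤ ⌈(Δ(G) + 3)/2⌉, where χ(G) is the chromatic number and Δ(G) the maximum degree of G. That is, Reed's conjecture for triangle-free graphs holds on the class of graphs of pathwidth at most 5. -/
/-- `G` admits a path decomposition of width at most `w`: a finite sequence of bags
`Bag 0, …, Bag (m-1)` such that every vertex lies in some bag, every edge has both
endpoints in some bag, the bags containing any fixed vertex occur at consecutive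
indices, and every bag has at most `w + 1` vertices. -/
def HasPathDecompOfWidth {V : Type*} [DecidableEq V] (G : SimpleGraph V) (w : ℕ) : Prop :=
  ∃ (m : ℕ) (Bag : Fin m → Finset V),
    (∀ v : V, ∃ i, v ∈ Bag i) ∧
    (∀ u v : V, G.Adj u v → ∃ i, u ∈ Bag i ∧ v ∈ Bag i) ∧
    (∀ (v : V) (i j l : Fin m), i ≤ j → j ≤ l → v ∈ Bag i → v ∈ Bag l → v ∈ Bag j) ∧
    (∀ i, (Bag i).card ≤ w + 1)

namespace ReedPW

/-- `c` is proper on the finset `T`. -/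
def PropOn {V : Type*} {k : ℕ} (G : SimpleGraph V) (c : V → Fin k) (T : Finset V) : Prop :=
  ∀ a ∈ T, ∀ b ∈ T, G.Adj a b → c a ≠ c b

lemma propOn_update {V : Type*} [DecidableEq V] {k : ℕ} {G : SimpleGraph V} {c : V → Fin k}
    {T : Finset V} (hc : PropOn G c T) {x : V} {i : Fin k}
    (hi : ∀ u ∈ T, G.Adj x u → c u ≠ i) :
    PropOn G (Function.update c x i) (insert x T) := by
  intro a ha b hb hab
  have := hab.ne
  have := hab.symm
  rw [Finset.mem_insert] at ha hb
  simp only [Function.update_apply]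
  unfold PropOn at hc
  grind

/-- An independent triple in `D` with colours `p q r`. -/
def Tri {V : Type*} (G : SimpleGraph V) (c : V → Fin 4) (D : Finset V) (p q r : Fin 4) : Prop :=
  ∃ a ∈ D, ∃ b ∈ D, ∃ d ∈ D, c a = p ∧ c b = q ∧ c d = r ∧
    ¬ G.Adj a b ∧ ¬ G.Adj a d ∧ ¬ G.Adj b d

/-- No rainbow independent quadruple in `T`. -/
def RF {V : Type*} (G : SimpleGraph V) (c : V → Fin 4) (T : Finset V) : Prop :=
  ∀ a ∈ T, ∀ b ∈ T, ∀ d ∈ T, ∀ e ∈ T,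
    ¬ G.Adj a b → ¬ G.Adj a d → ¬ G.Adj a e → ¬ G.Adj b d → ¬ G.Adj b e → ¬ G.Adj d e →
    c a ≠ c b → c a ≠ c d → c a ≠ c e → c b ≠ c d → c b ≠ c e → c d ≠ c e → False

lemma Tri.swap1 {V : Type*} {G : SimpleGraph V} {c : V → Fin 4} {D : Finset V} {p q r : Fin 4}
    (h : Tri G c D p q r) : Tri G c D q p r := by
  obtain ⟨a, ha, b, hb, d, hd, h1, h2, h3, h4, h5, h6⟩ := h
  exact ⟨b, hb, a, ha, d, hd, h2, h1, h3, fun h => h4 h.symm, h6, h5⟩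

lemma Tri.swap2 {V : Type*} {G : SimpleGraph V} {c : V → Fin 4} {D : Finset V} {p q r : Fin 4}
    (h : Tri G c D p q r) : Tri G c D p r q := by
  obtain ⟨a, ha, b, hb, d, hd, h1, h2, h3, h4, h5, h6⟩ := h
  exact ⟨a, ha, d, hd, b, hb, h1, h3, h2, h5, h4, fun h => h6 h.symm⟩

lemma tri_perm {V : Type*} {G : SimpleGraph V} {c : V → Fin 4} {D : Finset V} {p q r x : Fin 4}
    {p' q' r' : Fin 4}
    (h : Tri G c D p q r) (h1 : p ≠ q) (h2 : p ≠ r) (h3 : q ≠ r) (h4 : x ≠ p) (h5 : x ≠ q)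
    (h6 : x ≠ r)
    (h1' : p' ≠ q') (h2' : p' ≠ r') (h3' : q' ≠ r') (h4' : x ≠ p') (h5' : x ≠ q')
    (h6' : x ≠ r') : Tri G c D p' q' r' := by
  have aux : ∀ s : Fin 4, x ≠ s → s = p ∨ s = q ∨ s = r := by
    clear h h1' h2' h3' h4' h5' h6'
    intro s hs
    omega
  rcases aux p' h4' with rfl | rfl | rfl <;> rcases aux q' h5' with rfl | rfl | rfl <;>
    rcases aux r' h6' with rfl | rfl | rfl <;>
    first
    | exact absurd rfl h1'
    | exact absurd rfl h2'
    | exact absurd rfl h3'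
    | exact h
    | exact h.swap2
    | exact h.swap1
    | exact h.swap1.swap2
    | exact h.swap2.swap1
    | exact h.swap1.swap2.swap1

lemma sum_classes {V : Type*} [DecidableEq V] (c : V → Fin 4) (D : Finset V) :
    (D.filter (fun v => c v = 0)).card + (D.filter (fun v => c v = 1)).card +
    (D.filter (fun v => c v = 2)).card + (D.filter (fun v => c v = 3)).card = D.card := by
  rw [Finset.card_eq_sum_card_fiberwise (f := c) (s := D) (t := Finset.univ) (by simp)]
  simp [Fin.sum_univ_four]

lemma sum_classes' {V : Type*} [DecidableEq V] (c : V → Fin 4) (D : Finset V) {x y z w : Fin 4}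
    (h1 : x ≠ y) (h2 : x ≠ z) (h3 : x ≠ w) (h4 : y ≠ z) (h5 : y ≠ w) (h6 : z ≠ w) :
    (D.filter (fun v => c v = x)).card + (D.filter (fun v => c v = y)).card +
    (D.filter (fun v => c v = z)).card + (D.filter (fun v => c v = w)).card = D.card := by
  have := sum_classes c D
  fin_cases x <;> fin_cases y <;> first | exact absurd rfl h1 | skip
  all_goals fin_cases z <;> first | exact absurd rfl h2 | exact absurd rfl h4 | skip
  all_goals fin_cases w <;>
    first | exact absurd rfl h3 | exact absurd rfl h5 | exact absurd rfl h6 | skip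
  all_goals simp only [Fin.zero_eta, Fin.mk_one, Fin.reduceFinMk]; omega

lemma uniq_of_card {V : Type*} [DecidableEq V] {c : V → Fin 4} {D : Finset V} {x : Fin 4}
    (h : (D.filter (fun v => c v = x)).card ≤ 1) :
    ∀ a ∈ D, ∀ b ∈ D, c a = x → c b = x → a = b := by
  intro a ha b hb h1 h2
  exact Finset.card_le_one.1 h a (by simp [ha, h1]) b (by simp [hb, h2])

lemma key_sub {V : Type*} [DecidableEq V] {G : SimpleGraph V} {c : V → Fin 4} {D : Finset V}
    (hR : RF G c D) {x y z w : Fin 4}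
    (h1 : x ≠ y) (h2 : x ≠ z) (h3 : x ≠ w) (h4 : y ≠ z) (h5 : y ≠ w) (h6 : z ≠ w)
    (hx : (D.filter (fun v => c v = x)).card ≤ 1)
    (hy : (D.filter (fun v => c v = y)).card ≤ 1)
    (hz : (D.filter (fun v => c v = z)).card ≤ 1)
    (hw : (D.filter (fun v => c v = w)).card ≤ 2)
    (t1 : Tri G c D x y z) (t2 : Tri G c D x y w) (t3 : Tri G c D x z w) (t4 : Tri G c D y z w) :
    False := by
  obtain ⟨a1, a1m, a2, a2m, a3, a3m, ca1, ca2, ca3, a12, a13, a23⟩ := t1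
  obtain ⟨b1, b1m, b2, b2m, b4, b4m, cb1, cb2, cb4, b12, b14, b24⟩ := t2
  obtain ⟨c1, c1m, c3, c3m, c4, c4m, cc1, cc3, cc4, c13, c14, c34⟩ := t3
  obtain ⟨d2, d2m, d3, d3m, d4, d4m, cd2, cd3, cd4, d23, d24, d34⟩ := t4
  have ux := uniq_of_card hx
  have uy := uniq_of_card hy
  have uz := uniq_of_card hz
  obtain rfl := ux a1 a1m b1 b1m ca1 cb1
  obtain rfl := ux a1 a1m c1 c1m ca1 cc1
  obtain rfl := uy a2 a2m b2 b2m ca2 cb2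
  obtain rfl := uy a2 a2m d2 d2m ca2 cd2
  obtain rfl := uz a3 a3m c3 c3m ca3 cc3
  obtain rfl := uz a3 a3m d3 d3m ca3 cd3
  have key : ∀ e ∈ D, c e = w → ¬ G.Adj a1 e → ¬ G.Adj a2 e → ¬ G.Adj a3 e → False := by
    intro e he ce e1 e2 e3
    apply hR a1 a1m a2 a2m a3 a3m e he a12 a13 e1 a23 e2 e3 <;> simp only [ca1, ca2, ca3, ce] <;>
      assumption
  have : b4 = c4 ∨ b4 = d4 ∨ c4 = d4 := by
    by_contra hcon
    push Not at hcon
    have h3 : ({b4, c4, d4} : Finset V) ⊆ D.filter (fun v => c v = w) := by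
      intro v hv
      simp only [Finset.mem_insert, Finset.mem_singleton] at hv
      rcases hv with rfl | rfl | rfl <;> simp [*]
    have := Finset.card_le_card h3
    rw [Finset.card_eq_three.2 ⟨b4, c4, d4, hcon.1, hcon.2.1, hcon.2.2, rfl⟩] at this
    omega
  rcases this with rfl | rfl | rfl
  · exact key b4 b4m cb4 b14 b24 c34
  · exact key b4 b4m cb4 b14 b24 d34
  · exact key c4 c4m cc4 c14 d24 c34

lemma RF.mono {V : Type*} {G : SimpleGraph V} {c : V → Fin 4} {D T : Finset V}
    (h : RF G c T) (hD : D ⊆ T) : RF G c D := by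
  intro a ha b hb d hd e he
  exact h a (hD ha) b (hD hb) d (hD hd) e (hD he)

lemma Tri.pos {V : Type*} [DecidableEq V] {G : SimpleGraph V} {c : V → Fin 4} {D : Finset V}
    {p q r : Fin 4} (h : Tri G c D p q r) :
    0 < (D.filter (fun v => c v = p)).card ∧ 0 < (D.filter (fun v => c v = q)).card ∧
    0 < (D.filter (fun v => c v = r)).card := by
  obtain ⟨a, ha, b, hb, d, hd, h1, h2, h3, -⟩ := h
  simp only [Finset.card_pos]
  exact ⟨⟨a, by simp [*]⟩, ⟨b, by simp [*]⟩, ⟨d, by simp [*]⟩⟩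

lemma key {V : Type*} [DecidableEq V] {G : SimpleGraph V} {c : V → Fin 4} {T N D : Finset V}
    (hND : N.card + D.card ≤ 5) (hNT : N ⊆ T) (hDT : D ⊆ T)
    (hR : RF G c T) (hN : ∀ a ∈ N, ∀ b ∈ N, ¬ G.Adj a b) :
    ∃ x : Fin 4, (∀ u ∈ N, c u ≠ x) ∧ ∀ p q r : Fin 4, p ≠ q → p ≠ r → q ≠ r → x ≠ p → x ≠ q →
      x ≠ r → ¬ Tri G c D p q r := by
  by_contra hcon
  push Not at hcon
  have bad : ∀ x, 0 < (N.filter (fun v => c v = x)).card ∨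
      ∀ p q r : Fin 4, p ≠ q → p ≠ r → q ≠ r → x ≠ p → x ≠ q → x ≠ r → Tri G c D p q r := by
    intro x
    by_cases h : ∀ u ∈ N, c u ≠ x
    · right
      obtain ⟨p, q, r, h1, h2, h3, h4, h5, h6, h7⟩ := hcon x h
      intro p' q' r' h1' h2' h3' h4' h5' h6'
      exact tri_perm h7 h1 h2 h3 h4 h5 h6 h1' h2' h3' h4' h5' h6'
    · left
      push Not at h
      obtain ⟨u, hu, hc⟩ := h
      exact Finset.card_pos.2 ⟨u, by simp [*]⟩
  have sN := sum_classes c N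
  have sD := sum_classes c D
  have hRD := hR.mono hDT
  -- case analysis lemmas
  have one : ∀ x y z w : Fin 4, x ≠ y → x ≠ z → x ≠ w → y ≠ z → y ≠ w → z ≠ w →
      0 < N.card → Tri G c D x y z → Tri G c D x y w → Tri G c D x z w → False := by
    intro x y z w h1 h2 h3 h4 h5 h6 hn t1 t2 t3
    have s := sum_classes' c D h1 h2 h3 h4 h5 h6
    have p1 := t1.pos
    have p2 := t2.pos
    have hx : (D.filter (fun v => c v = x)).card ≤ 1 := by omega
    have hy : (D.filter (fun v => c v = y)).card ≤ 1 := by omega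
    have hz : (D.filter (fun v => c v = z)).card ≤ 1 := by omega
    have hw : (D.filter (fun v => c v = w)).card ≤ 1 := by omega
    obtain ⟨a1, a1m, a2, a2m, a3, a3m, ca1, ca2, ca3, a12, a13, a23⟩ := t1
    obtain ⟨b1, b1m, b2, b2m, b4, b4m, cb1, cb2, cb4, b12, b14, b24⟩ := t2
    obtain ⟨c1, c1m, c3, c3m, c4, c4m, cc1, cc3, cc4, c13, c14, c34⟩ := t3
    obtain rfl := uniq_of_card hx a1 a1m b1 b1m ca1 cb1
    obtain rfl := uniq_of_card hy a2 a2m b2 b2m ca2 cb2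
    obtain rfl := uniq_of_card hz a3 a3m c3 c3m ca3 cc3
    obtain rfl := uniq_of_card hw b4 b4m c4 c4m cb4 cc4
    apply hRD a1 a1m a2 a2m a3 a3m b4 b4m a12 a13 b14 a23 b24 c34 <;>
      simp only [ca1, ca2, ca3, cb4] <;> assumption
  have four : ¬ (0 < (N.filter (fun v => c v = 0)).card ∧ 0 < (N.filter (fun v => c v = 1)).card ∧
      0 < (N.filter (fun v => c v = 2)).card ∧ 0 < (N.filter (fun v => c v = 3)).card) := by
    simp only [Finset.card_pos]
    rintro ⟨⟨a, ha⟩, ⟨b, hb⟩, ⟨d, hd⟩, ⟨e, he⟩⟩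
    simp only [Finset.mem_filter] at ha hb hd he
    apply hR a (hNT ha.1) b (hNT hb.1) d (hNT hd.1) e (hNT he.1) (hN _ ha.1 _ hb.1)
      (hN _ ha.1 _ hd.1) (hN _ ha.1 _ he.1) (hN _ hb.1 _ hd.1) (hN _ hb.1 _ he.1)
      (hN _ hd.1 _ he.1) <;> simp [*]
  have d01 : (0 : Fin 4) ≠ 1 := by decide
  have d02 : (0 : Fin 4) ≠ 2 := by decide
  have d03 : (0 : Fin 4) ≠ 3 := by decide
  have d12 : (1 : Fin 4) ≠ 2 := by decide
  have d13 : (1 : Fin 4) ≠ 3 := by decide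
  have d23 : (2 : Fin 4) ≠ 3 := by decide
  have B0 : 0 < (N.filter (fun v => c v = 0)).card ∨ Tri G c D 1 2 3 :=
    (bad 0).imp_right fun h => h 1 2 3 d12 d13 d23 d01 d02 d03
  have B1 : 0 < (N.filter (fun v => c v = 1)).card ∨ Tri G c D 0 2 3 :=
    (bad 1).imp_right fun h => h 0 2 3 d02 d03 d23 d01.symm d12 d13
  have B2 : 0 < (N.filter (fun v => c v = 2)).card ∨ Tri G c D 0 1 3 :=
    (bad 2).imp_right fun h => h 0 1 3 d01 d03 d13 d02.symm d12.symm d23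
  have B3 : 0 < (N.filter (fun v => c v = 3)).card ∨ Tri G c D 0 1 2 :=
    (bad 3).imp_right fun h => h 0 1 2 d01 d02 d12 d03.symm d13.symm d23.symm
  rcases B0 with B0 | B0 <;> rcases B1 with B1 | B1 <;> rcases B2 with B2 | B2 <;>
    rcases B3 with B3 | B3
  · exact four ⟨B0, B1, B2, B3⟩
  · have := B3.pos; omega
  · have := B2.pos; omega
  · have := B3.pos; have := B2.pos; omega
  · have := B1.pos; omega
  · have := B3.pos; have := B1.pos; omega
  · have := B2.pos; have := B1.pos; omega
  · exact one 0 1 2 3 d01 d02 d03 d12 d13 d23 (by omega) B3 B2 B1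
  · have := B0.pos; omega
  · have := B3.pos; have := B0.pos; omega
  · have := B2.pos; have := B0.pos; omega
  · exact one 1 0 2 3 d01.symm d12 d13 d02 d03 d23 (by omega) B3.swap1 B2.swap1 B0
  · have := B1.pos; have := B0.pos; omega
  · exact one 2 0 1 3 d02.symm d12.symm d23 d01 d03 d13 (by omega) B3.swap2.swap1 B1.swap1 B0.swap1
  · exact one 3 0 1 2 d03.symm d13.symm d23.symm d01 d02 d12 (by omega) B2.swap2.swap1
      B1.swap2.swap1 B0.swap2.swap1
  · have p0 := B0.pos
    have p1 := B1.pos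
    rcases Nat.lt_or_ge (D.filter (fun v => c v = 0)).card 2 with q0 | q0
    · rcases Nat.lt_or_ge (D.filter (fun v => c v = 1)).card 2 with q1 | q1
      · rcases Nat.lt_or_ge (D.filter (fun v => c v = 2)).card 2 with q2 | q2
        · exact key_sub hRD d01 d02 d03 d12 d13 d23 (by omega) (by omega) (by omega) (by omega)
            B3 B2 B1 B0
        · exact key_sub hRD d01 d03 d02 d13 d12 d23.symm (by omega) (by omega) (by omega)
            (by omega) B2 B3 B1.swap2 B0.swap2
      · exact key_sub hRD d02 d03 d01 d23 d12.symm d13.symm (by omega) (by omega) (by omega)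
            (by omega) B1 B3.swap2 B2.swap2 B0.swap1.swap2
    · exact key_sub hRD d12 d13 d01.symm d23 d02.symm d03.symm (by omega) (by omega) (by omega)
            (by omega) B0 B3.swap1.swap2 B2.swap1.swap2 B1.swap1.swap2

theorem four_col {V : Type*} [Fintype V] [DecidableEq V] (G : SimpleGraph V)
    (htf : G.CliqueFree 3) (hpw : HasPathDecompOfWidth G 5) :
    ∃ c : V → Fin 4, PropOn G c Finset.univ := by
  classical
  obtain ⟨m, Bag, hV, hE, hI, hW⟩ := hpw
  have tri : ∀ a b d, G.Adj a b → G.Adj a d → G.Adj b d → False := by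
    intro a b d h1 h2 h3
    exact htf {a, b, d} (SimpleGraph.is3Clique_triple_iff.2 ⟨h1, h2, h3⟩)
  have hf : ∀ v, ∃ i, v ∈ Bag i ∧ ∀ j, v ∈ Bag j → i ≤ j := by
    intro v
    obtain ⟨i, hi⟩ := hV v
    have hne : (Finset.univ.filter (fun i => v ∈ Bag i)).Nonempty := ⟨i, by simp [hi]⟩
    refine ⟨_, (Finset.mem_filter.1 (Finset.min'_mem _ hne)).2, fun j hj => ?_⟩
    exact Finset.min'_le _ _ (by simp [hj])
  choose f hf1 hf2 using hf
  have main : ∀ S : Finset V, ∃ c : V → Fin 4, PropOn G c S ∧ ∀ i, RF G c (S ∩ Bag i) := by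
    intro S
    induction S using Finset.induction_on_max_value f with
    | empty => exact ⟨fun _ => 0, by simp [PropOn], by simp [RF]⟩
    | insert v S hv hmax ih =>
      obtain ⟨c, hc, hR⟩ := ih
      set T := S ∩ Bag (f v) with hT
      have hTc : T.card ≤ 5 := by
        have h1 : insert v T ⊆ Bag (f v) := by
          intro u hu
          rcases Finset.mem_insert.1 hu with rfl | hu
          · exact hf1 _
          · exact (Finset.mem_inter.1 hu).2
        have h2 := (Finset.card_le_card h1).trans (hW _)
        rw [Finset.card_insert_of_notMem (by simp [hT, hv])] at h2
        omega
      have hin : ∀ u ∈ S, ∀ i, u ∈ Bag i → v ∈ Bag i → u ∈ T := by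
        intro u hu i hui hvi
        exact Finset.mem_inter.2 ⟨hu, hI u (f u) (f v) i (hmax u hu) (hf2 v i hvi) (hf1 u) hui⟩
      obtain ⟨x, hx1, hx2⟩ := key (G := G) (c := c) (T := T) (N := T.filter (fun u => G.Adj v u))
        (D := T.filter (fun u => ¬ G.Adj v u))
        (by rw [Finset.card_filter_add_card_filter_not]; exact hTc)
        (Finset.filter_subset _ _) (Finset.filter_subset _ _) (hR _)
        (by
          intro a ha b hb hab
          exact tri v a b (Finset.mem_filter.1 ha).2 (Finset.mem_filter.1 hb).2 hab)
      refine ⟨Function.update c v x, propOn_update hc ?_, ?_⟩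
      · intro u hu huv
        obtain ⟨i, h1, h2⟩ := hE _ _ huv
        exact hx1 u (Finset.mem_filter.2 ⟨hin u hu i h2 h1, huv⟩)
      · intro i
        have hx3 : ∀ a ∈ S ∩ Bag i, ∀ b ∈ S ∩ Bag i, ∀ d ∈ S ∩ Bag i, v ∈ Bag i →
            ¬ G.Adj v a → ¬ G.Adj v b → ¬ G.Adj v d → ¬ G.Adj a b → ¬ G.Adj a d → ¬ G.Adj b d →
            x ≠ c a → x ≠ c b → x ≠ c d → c a ≠ c b → c a ≠ c d → c b ≠ c d → False := by
          intro a ha b hb d hd hvi h1 h2 h3 h4 h5 h6 h7 h8 h9 h10 h11 h12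
          rw [Finset.mem_inter] at ha hb hd
          refine hx2 (c a) (c b) (c d) h10 h11 h12 h7 h8 h9 ⟨a, ?_, b, ?_, d, ?_, rfl, rfl, rfl,
            h4, h5, h6⟩
          · exact Finset.mem_filter.2 ⟨hin _ ha.1 i ha.2 hvi, h1⟩
          · exact Finset.mem_filter.2 ⟨hin _ hb.1 i hb.2 hvi, h2⟩
          · exact Finset.mem_filter.2 ⟨hin _ hd.1 i hd.2 hvi, h3⟩
        have mem : ∀ a ∈ insert v S ∩ Bag i, (a = v ∧ v ∈ Bag i) ∨ (a ≠ v ∧ a ∈ S ∩ Bag i) := by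
          intro a ha
          simp only [Finset.mem_inter, Finset.mem_insert] at ha ⊢
          by_cases h : a = v
          · subst h; simp [ha.2]
          · simp [h] at ha ⊢; exact ha
        intro a ha b hb d hd e he h1 h2 h3 h4 h5 h6 h7 h8 h9 h10 h11 h12
        rcases mem a ha with ⟨rfl, hvi⟩ | ⟨na, ha'⟩
        · rcases mem b hb with ⟨rfl, -⟩ | ⟨nb, hb'⟩
          · exact h7 rfl
          rcases mem d hd with ⟨rfl, -⟩ | ⟨nd, hd'⟩
          · exact h8 rfl
          rcases mem e he with ⟨rfl, -⟩ | ⟨ne, he'⟩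
          · exact h9 rfl
          simp only [Function.update_self, Function.update_of_ne nb, Function.update_of_ne nd,
            Function.update_of_ne ne] at *
          exact hx3 b hb' d hd' e he' hvi h1 h2 h3 h4 h5 h6 h7 h8 h9 h10 h11 h12
        rcases mem b hb with ⟨rfl, hvi⟩ | ⟨nb, hb'⟩
        · rcases mem d hd with ⟨rfl, -⟩ | ⟨nd, hd'⟩
          · exact h10 rfl
          rcases mem e he with ⟨rfl, -⟩ | ⟨ne, he'⟩
          · exact h11 rfl
          simp only [Function.update_self, Function.update_of_ne na, Function.update_of_ne nd,
            Function.update_of_ne ne] at *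
          exact hx3 a ha' d hd' e he' hvi (fun h => h1 h.symm) h4 h5 h2 h3 h6 h7.symm h10 h11
            h8 h9 h12
        rcases mem d hd with ⟨rfl, hvi⟩ | ⟨nd, hd'⟩
        · rcases mem e he with ⟨rfl, -⟩ | ⟨ne, he'⟩
          · exact h12 rfl
          simp only [Function.update_self, Function.update_of_ne na, Function.update_of_ne nb,
            Function.update_of_ne ne] at *
          exact hx3 a ha' b hb' e he' hvi (fun h => h2 h.symm) (fun h => h4 h.symm) h6 h1 h3 h5
            h8.symm h10.symm h12 h7 h9 h11
        rcases mem e he with ⟨rfl, hvi⟩ | ⟨ne, he'⟩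
        · simp only [Function.update_self, Function.update_of_ne na, Function.update_of_ne nb,
            Function.update_of_ne nd] at *
          exact hx3 a ha' b hb' d hd' hvi (fun h => h3 h.symm) (fun h => h5 h.symm)
            (fun h => h6 h.symm) h1 h2 h4 h9.symm h11.symm h12.symm h7 h8 h10
        simp only [Function.update_of_ne na, Function.update_of_ne nb,
            Function.update_of_ne nd, Function.update_of_ne ne] at *
        exact hR i a ha' b hb' d hd' e he' h1 h2 h3 h4 h5 h6 h7 h8 h9 h10 h11 h12
  obtain ⟨c, hc, -⟩ := main Finset.univ
  exact ⟨c, hc⟩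

lemma free_of {V : Type*} [DecidableEq V] {G : SimpleGraph V} {k : ℕ} {c : V → Fin k}
    {T : Finset V} {x : V} (A : Finset V) (hA : A.card < k)
    (h : ∀ u ∈ T, G.Adj x u → c u ∈ A.image c) :
    ∃ i, ∀ u ∈ T, G.Adj x u → c u ≠ i := by
  have h1 : (A.image c).card < (Finset.univ : Finset (Fin k)).card := by
    rw [Finset.card_fin]
    exact Finset.card_image_le.trans_lt hA
  obtain ⟨i, -, hi⟩ := Finset.exists_mem_notMem_of_card_lt_card h1
  refine ⟨i, fun u hu hxu hc => hi ?_⟩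
  rw [← hc]
  exact h u hu hxu

section
variable {V : Type*} [Fintype V] [DecidableEq V] {G : SimpleGraph V} [DecidableRel G.Adj]

lemma free_a (hd : ∀ v, G.degree v ≤ 3) {c : V → Fin 3} {T : Finset V} {x z : V}
    (hz : G.Adj x z) (hzT : z ∉ T) : ∃ i, ∀ u ∈ T, G.Adj x u → c u ≠ i := by
  apply free_of ((G.neighborFinset x).erase z)
  · have := hd x
    rw [Finset.card_erase_of_mem (by simpa using hz), G.card_neighborFinset_eq_degree]
    omega
  · intro u hu hxu
    refine Finset.mem_image_of_mem c (Finset.mem_erase.2 ⟨?_, by simpa using hxu⟩)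
    rintro rfl
    exact hzT hu

lemma free_b (hd : ∀ v, G.degree v ≤ 3) {c : V → Fin 3} {T : Finset V} {x z w : V}
    (hz : G.Adj x z) (hw : G.Adj x w) (hzw : z ≠ w) (hc : c z = c w) :
    ∃ i, ∀ u ∈ T, G.Adj x u → c u ≠ i := by
  apply free_of ((G.neighborFinset x).erase z)
  · have := hd x
    rw [Finset.card_erase_of_mem (by simpa using hz), G.card_neighborFinset_eq_degree]
    omega
  · intro u hu hxu
    by_cases h : u = z
    · subst h
      rw [hc]
      exact Finset.mem_image_of_mem c (Finset.mem_erase.2 ⟨hzw.symm, by simpa using hw⟩)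
    · exact Finset.mem_image_of_mem c (Finset.mem_erase.2 ⟨h, by simpa using hxu⟩)

lemma extList (hd : ∀ v, G.degree v ≤ 3) (z : V) (l : List V) : ∀ (c : V → Fin 3) (T : Finset V),
    List.IsChain G.Adj (l ++ [z]) → (l ++ [z]).Nodup → (∀ v ∈ l ++ [z], v ∉ T) → PropOn G c T →
    ∃ c' : V → Fin 3, (∀ v, v ∉ l → c' v = c v) ∧ PropOn G c' (T ∪ l.toFinset) := by
  induction l with
  | nil => intro c T _ _ _ h; exact ⟨c, fun _ _ => rfl, by simpa using h⟩
  | cons x l ih =>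
    intro c T h1 h2 h3 h4
    obtain ⟨y, hxy, hy⟩ : ∃ y, G.Adj x y ∧ y ∈ l ++ [z] := by
      cases l with
      | nil => exact ⟨z, by simpa using h1, by simp⟩
      | cons y l => 
        simp only [List.cons_append, List.isChain_cons_cons] at h1
        exact ⟨y, h1.1, by simp⟩
    obtain ⟨i, hi⟩ := free_a hd (c := c) (T := T) hxy (h3 y (by simp at hy ⊢; tauto))
    simp only [List.cons_append, List.nodup_cons] at h2
    obtain ⟨c', hc1, hc2⟩ := ih (Function.update c x i) (insert x T)
      (by simpa using List.IsChain.tail h1) h2.2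
      (by
        intro v hv
        rw [Finset.mem_insert]
        rintro (rfl | h)
        · exact h2.1 hv
        · exact h3 v (by simp at hv ⊢; tauto) h)
      (propOn_update h4 hi)
    refine ⟨c', ?_, ?_⟩
    · intro v hv
      simp only [List.mem_cons, not_or] at hv
      rw [hc1 v hv.2, Function.update_of_ne hv.1]
    · convert hc2 using 1
      ext v; simp

lemma lemA (hd : ∀ v, G.degree v ≤ 3) {y x u : V} {m : List V} {c : V → Fin 3} {T : Finset V}
    (h1 : List.IsChain G.Adj (y :: m ++ [x])) (h2 : (y :: m ++ [x]).Nodup)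
    (h3 : ∀ v ∈ y :: m ++ [x], v ∉ T) (h4 : PropOn G c T) (hy : ∀ v ∈ T, ¬ G.Adj y v)
    (hu : u ∈ T) (hxu : G.Adj x u) (hxy : G.Adj x y) :
    ∃ c' : V → Fin 3, PropOn G c' (T ∪ (y :: m ++ [x]).toFinset) := by
  have h5 : PropOn G (Function.update c y (c u)) (insert y T) :=
    propOn_update h4 fun v hv h => absurd h (hy v hv)
  simp only [List.cons_append, List.nodup_cons] at h2
  obtain ⟨c', hc1, hc2⟩ := extList hd x m _ _ (by simpa using List.IsChain.tail h1) h2.2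
      (by
        intro v hv
        rw [Finset.mem_insert]
        rintro (rfl | h)
        · exact h2.1 hv
        · exact h3 v (by simp at hv ⊢; tauto) h) h5
  have hum : u ∉ y :: m ++ [x] := fun h => h3 u h hu
  simp only [List.cons_append, List.mem_cons, List.mem_append, not_or] at hum h2
  have e : c' u = c' y := by
    rw [hc1 u hum.2.1, hc1 y h2.1.1, Function.update_self, Function.update_of_ne hum.1]
  obtain ⟨i, hi⟩ := free_b hd (c := c') (T := insert y T ∪ m.toFinset) hxu hxy hum.1 e
  refine ⟨Function.update c' x i, ?_⟩
  · convert propOn_update hc2 hi using 1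
    ext v; simp; tauto

lemma lemB (hd : ∀ v, G.degree v ≤ 3) {w0 w1 w2 wj : V} {p q : List V} {c : V → Fin 3}
    {T : Finset V} {L : List V} (hL : L = w0 :: w1 :: w2 :: (p ++ wj :: q))
    (h1 : List.IsChain G.Adj L) (h2 : L.Nodup)
    (h3 : ∀ v ∈ L, v ∉ T) (h4 : PropOn G c T) (h5 : ∀ v ∈ T, ¬ G.Adj w0 v)
    (h6 : ∀ v ∈ T, ¬ G.Adj w2 v) (h7 : ¬ G.Adj w0 w2) (h8 : G.Adj w1 wj) :
    ∃ c' : V → Fin 3, PropOn G c' (T ∪ L.toFinset) := by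
  subst hL
  have h5 : PropOn G (Function.update c w0 0) (insert w0 T) :=
    propOn_update h4 fun v hv h => absurd h (h5 v hv)
  have h6 : PropOn G (Function.update (Function.update c w0 0) w2 0) (insert w2 (insert w0 T)) := by
    refine propOn_update h5 fun v hv h => ?_
    rcases Finset.mem_insert.1 hv with rfl | hv
    · exact absurd h.symm h7
    · exact absurd h (h6 v hv)
  simp only [List.isChain_cons_cons] at h1
  obtain ⟨h01, h12, hch⟩ := h1
  have hch2 : List.IsChain G.Adj (p ++ wj :: q) := hch.tail
  have hpj : List.IsChain G.Adj (p ++ [wj]) := (List.isChain_split.1 hch2).1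
  have hjq : List.IsChain G.Adj (wj :: q) := (List.isChain_split.1 hch2).2
  have hq : List.IsChain G.Adj ((q.reverse ++ [wj]) ++ [w1]) := by
    have : List.IsChain G.Adj (w1 :: wj :: q) := List.isChain_cons_cons.2 ⟨h8, hjq⟩
    have h := List.isChain_reverse.2 this
    simp only [List.reverse_cons] at h
    exact h.imp fun a b hab => hab.symm
  simp only [List.nodup_cons, List.mem_cons, List.mem_append, not_or, List.nodup_append] at h2
  simp only [List.mem_cons, List.mem_append] at h3
  obtain ⟨⟨n01, n02, n0p, n0j, n0q⟩, ⟨n12, n1p, n1j, n1q⟩, ⟨n2p, n2j, n2q⟩, np, ⟨njq, nq⟩, npj⟩ := h2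
  obtain ⟨c1, hc1, hc1'⟩ := extList hd wj p _ _ hpj
    (by simp only [List.nodup_append]; grind)
    (by
      intro v hv
      simp only [List.mem_append, List.mem_singleton] at hv
      simp only [Finset.mem_insert]
      grind) h6
  obtain ⟨c2, hc2, hc2'⟩ := extList hd w1 (q.reverse ++ [wj]) _ _ hq
    (by simp only [List.nodup_append, List.nodup_reverse]; grind)
    (by
      intro v hv
      simp only [List.mem_append, List.mem_singleton, List.mem_reverse] at hv
      simp only [Finset.mem_insert, Finset.mem_union, List.mem_toFinset]
      grind) hc1'
  have e : c2 w0 = c2 w2 := by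
    rw [hc2 w0 (by simp; tauto), hc2 w2 (by simp; tauto), hc1 w0 n0p, hc1 w2 n2p,
      Function.update_self, Function.update_of_ne n02, Function.update_self]
  obtain ⟨i, hi⟩ := free_b hd (c := c2)
    (T := insert w2 (insert w0 T) ∪ p.toFinset ∪ (q.reverse ++ [wj]).toFinset) h01.symm h12 n02 e
  refine ⟨Function.update c2 w1 i, ?_⟩
  · convert propOn_update hc2' hi using 1
    ext v; simp; tauto

/-- first switch along a list -/
lemma exists_switch {α : Type*} (P : α → Prop) : ∀ (t : List α) (h : α), ¬ P h →
    (∀ v ∈ h :: t, ¬ P v) ∨ ∃ l₁ y x l₂, h :: t = l₁ ++ y :: x :: l₂ ∧ ¬ P y ∧ P x := by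
  intro t
  induction t with
  | nil => intro h hh; left; simpa using hh
  | cons a t ih =>
    intro h hh
    by_cases ha : P a
    · exact Or.inr ⟨[], h, a, t, rfl, hh, ha⟩
    · rcases ih a ha with h1 | ⟨l₁, y, x, l₂, e, h1, h2⟩
      · left
        intro v hv
        rcases List.mem_cons.1 hv with rfl | hv
        · exact hh
        · exact h1 v hv
      · exact Or.inr ⟨h :: l₁, y, x, l₂, by simp [e], h1, h2⟩

/-- last occurrence of a predicate in a list -/
lemma exists_last {α : Type*} (P : α → Prop) (t : List α) (h : ∃ v ∈ t, P v) :
    ∃ t₁ z t₂, t = t₁ ++ z :: t₂ ∧ P z ∧ ∀ v ∈ t₂, ¬ P v := by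
  induction t with
  | nil => simp at h
  | cons a t ih =>
    by_cases ht : ∃ v ∈ t, P v
    · obtain ⟨t₁, z, t₂, e, h1, h2⟩ := ih ht
      exact ⟨a :: t₁, z, t₂, by simp [e], h1, h2⟩
    · push Not at ht
      obtain ⟨v, hv, hP⟩ := h
      rcases List.mem_cons.1 hv with rfl | hv
      · exact ⟨[], v, t, rfl, hP, ht⟩
      · exact absurd hP (ht v hv)

theorem three_col (htf : G.CliqueFree 3) (hd : ∀ v, G.degree v ≤ 3) :
    ∀ S : Finset V, ∃ c : V → Fin 3, PropOn G c S := by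
  have tri : ∀ a b d, G.Adj a b → G.Adj a d → G.Adj b d → False := by
    intro a b d h1 h2 h3
    exact htf {a, b, d} (SimpleGraph.is3Clique_triple_iff.2 ⟨h1, h2, h3⟩)
  intro S
  induction S using Finset.strongInduction with
  | H S ih =>
  rcases S.eq_empty_or_nonempty with rfl | ⟨s, hs⟩
  · exact ⟨fun _ => 0, by simp [PropOn]⟩
  by_cases hdeg : ∃ v ∈ S, ∃ u, G.Adj v u ∧ u ∉ S
  · obtain ⟨v, hv, u, hvu, hu⟩ := hdeg
    obtain ⟨c, hc⟩ := ih (S.erase v) (Finset.erase_ssubset hv)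
    obtain ⟨i, hi⟩ := free_a hd (c := c) (T := S.erase v) hvu (fun h => hu (Finset.mem_of_mem_erase h))
    refine ⟨Function.update c v i, ?_⟩
    · have := propOn_update hc hi
      rwa [Finset.insert_erase hv] at this
  by_cases hdeg2 : ∃ v ∈ S, G.degree v ≤ 2
  · obtain ⟨v, hv, hv2⟩ := hdeg2
    obtain ⟨c, hc⟩ := ih (S.erase v) (Finset.erase_ssubset hv)
    obtain ⟨i, hi⟩ := free_of (G := G) (c := c) (T := S.erase v) (x := v) (G.neighborFinset v)
      (by rw [G.card_neighborFinset_eq_degree]; omega)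
      (fun u _ hvu => Finset.mem_image_of_mem c (by simpa using hvu))
    refine ⟨Function.update c v i, ?_⟩
    · have := propOn_update hc hi
      rwa [Finset.insert_erase hv] at this
  push Not at hdeg hdeg2
  -- third neighbours
  have third : ∀ v ∈ S, ∀ a b, ∃ w, G.Adj v w ∧ w ≠ a ∧ w ≠ b := by
    intro v hv a b
    have h1 : ({a, b} : Finset V).card < (G.neighborFinset v).card := by
      rw [G.card_neighborFinset_eq_degree]
      exact Finset.card_le_two.trans_lt (hdeg2 v hv)
    obtain ⟨w, hw, hw2⟩ := Finset.exists_mem_notMem_of_card_lt_card h1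
    simp only [Finset.mem_insert, Finset.mem_singleton, not_or] at hw2
    exact ⟨w, by simpa using hw, hw2.1, hw2.2⟩
  -- a longest path
  obtain ⟨P, ⟨hP1, hP2, hP3, hP4⟩, hmax⟩ : ∃ P : List V,
      (P ≠ [] ∧ P.Nodup ∧ List.IsChain G.Adj P ∧ ∀ v ∈ P, v ∈ S) ∧
      ∀ Q : List V, (Q ≠ [] ∧ Q.Nodup ∧ List.IsChain G.Adj Q ∧ ∀ v ∈ Q, v ∈ S) →
        Q.length ≤ P.length := by
    have hbd : ∀ Q : List V, (Q ≠ [] ∧ Q.Nodup ∧ List.IsChain G.Adj Q ∧ ∀ v ∈ Q, v ∈ S) →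
        Q.length ≤ Fintype.card V := fun Q hQ => hQ.2.1.length_le_card
    by_contra hcon
    push Not at hcon
    have : ∀ n : ℕ, ∃ Q : List V,
        (Q ≠ [] ∧ Q.Nodup ∧ List.IsChain G.Adj Q ∧ ∀ v ∈ Q, v ∈ S) ∧ n ≤ Q.length := by
      intro n
      induction n with
      | zero => exact ⟨[s], ⟨by simp, by simp, by simp, by simpa using hs⟩, by simp⟩
      | succ n ihn =>
        obtain ⟨Q, hQ, hn⟩ := ihn
        obtain ⟨Q', hQ', hn'⟩ := hcon Q hQ
        exact ⟨Q', hQ', by omega⟩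
    obtain ⟨Q, hQ, hn⟩ := this (Fintype.card V + 1)
    have := hbd Q hQ
    omega
  obtain ⟨h, t, rfl⟩ := List.exists_cons_of_ne_nil hP1
  have hnb : ∀ v, G.Adj h v → v ∈ t := by
    intro v hv
    by_contra hvt
    have := hmax (v :: h :: t) ⟨by simp, by
        rw [List.nodup_cons]
        refine ⟨?_, hP2⟩
        rw [List.mem_cons]
        rintro (rfl | h')
        · exact G.loopless.irrefl _ hv
        · exact hvt h', List.isChain_cons_cons.2 ⟨hv.symm, hP3⟩, by
        intro u hu
        rcases List.mem_cons.1 hu with rfl | hu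
        · exact hdeg h (hP4 h (by simp)) _ hv
        · exact hP4 u hu⟩
    simp at this
  have hhS : h ∈ S := hP4 h (by simp)
  obtain ⟨t₁, z, t₂, rfl, hz, hz2⟩ := exists_last (fun v => G.Adj h v) t (by
    obtain ⟨w, hw, -⟩ := third h hhS h h
    exact ⟨w, hnb w hw, hw⟩)
  have hnb' : ∀ v, G.Adj h v → v ∈ t₁ ++ [z] := by
    intro v hv
    have := hnb v hv
    have := hz2 v
    simp at *
    tauto
  -- the cycle
  set L := h :: (t₁ ++ [z]) with hLdef
  have hPL : h :: (t₁ ++ z :: t₂) = L ++ t₂ := by simp [hLdef]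
  rw [hPL] at hP2 hP3 hP4
  have hL2 : L.Nodup := hP2.of_append_left
  have hL3 : List.IsChain G.Adj L := hP3.left_of_append
  have hL4 : ∀ v ∈ L, v ∈ S := fun v hv => hP4 v (by simp [hv])
  have hST : S \ L.toFinset ⊂ S := by
    refine Finset.ssubset_iff_subset_ne.2 ⟨Finset.sdiff_subset, fun he => ?_⟩
    have : h ∈ S \ L.toFinset := by rw [he]; exact hhS
    simp [hLdef] at this
  obtain ⟨c, hc⟩ := ih _ hST
  have hun : S \ L.toFinset ∪ L.toFinset = S :=
    Finset.sdiff_union_of_subset (by intro v hv; exact hL4 v (by simpa using hv))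
  have hdis : ∀ v ∈ L, v ∉ S \ L.toFinset := by
    intro v hv; simp [hv]
  have hh : ¬ ∃ u ∈ S \ L.toFinset, G.Adj h u := by
    rintro ⟨u, hu, hhu⟩
    exact hdis u (by rw [hLdef]; exact List.mem_cons_of_mem _ (hnb' u hhu)) hu
  rcases exists_switch (fun v => ∃ u ∈ S \ L.toFinset, G.Adj v u) (t₁ ++ [z]) h hh with
    hno | ⟨l₁, y, x, l₂, e, hy, u, hu, hxu⟩
  · -- no neighbours outside
    have hno' : ∀ v ∈ L, ∀ u, G.Adj v u → u ∈ L := by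
      intro v hv u hvu
      by_contra hu
      exact hno v hv ⟨u, by simp [hu, hdeg v (hL4 v hv) u hvu], hvu⟩
    obtain ⟨w1, w2, rest, hr⟩ : ∃ w1 w2 rest, L = h :: w1 :: w2 :: rest := by
      rcases t₁ with _ | ⟨w1, t₁⟩
      · exfalso
        obtain ⟨w, hw, hwz, -⟩ := third h hhS z z
        have := hnb' w hw
        simp at this
        exact hwz this
      · rcases t₁ with _ | ⟨w2, t₁⟩
        · exact ⟨w1, z, [], rfl⟩
        · exact ⟨w1, w2, t₁ ++ [z], rfl⟩
    clear_value L
    subst hr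
    obtain ⟨wj, hj, hj1, hj2⟩ := third w1 (hL4 w1 (by simp)) h w2
    have hjL := hno' w1 (by simp) wj hj
    have hjr : wj ∈ rest := by
      simp only [List.mem_cons] at hjL
      rcases hjL with h' | h' | h' | h'
      · exact absurd h' hj1
      · exact absurd h' hj.ne'
      · exact absurd h' hj2
      · exact h'
    obtain ⟨p, q, rfl⟩ := List.append_of_mem hjr
    have hch := hL3
    simp only [List.isChain_cons_cons] at hch
    obtain ⟨c', hc'⟩ := lemB hd rfl hL3 hL2 hdis hc
      (fun v hv hv' => hno h (by simp [← hLdef]) ⟨v, hv, hv'⟩)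
      (fun v hv hv' => hno w2 (by simp [← hLdef]) ⟨v, hv, hv'⟩)
      (fun h' => tri _ _ _ hch.1.symm hch.2.1 h') hj
    exact ⟨c', hun ▸ hc'⟩
  · rw [← hLdef] at e
    -- rotate the cycle
    have hperm : (y :: (l₁.reverse ++ l₂.reverse) ++ [x]).Perm L := by
      rw [e]
      have : y :: (l₁.reverse ++ l₂.reverse) ++ [x] = (l₁ ++ [y]).reverse ++ (x :: l₂).reverse := by
        simp
      rw [this]
      have h2 : l₁ ++ y :: x :: l₂ = (l₁ ++ [y]) ++ (x :: l₂) := by simp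
      rw [h2]
      exact (List.reverse_perm _).append (List.reverse_perm _)
    have hch : List.IsChain G.Adj (l₁ ++ y :: x :: l₂) := e ▸ hL3
    have hsp := List.isChain_append_cons_cons.1 hch
    have hch' : List.IsChain G.Adj (y :: (l₁.reverse ++ l₂.reverse) ++ [x]) := by
      have : y :: (l₁.reverse ++ l₂.reverse) ++ [x] = (l₁ ++ [y]).reverse ++ (x :: l₂).reverse := by
        simp
      rw [this, List.isChain_append]
      refine ⟨List.isChain_reverse.2 (hsp.1.imp fun a b h => h.symm),
        List.isChain_reverse.2 (hsp.2.2.imp fun a b h => h.symm), ?_⟩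
      intro a ha b hb
      have h1 : a = h := by
        rw [List.getLast?_reverse] at ha
        have : L.head? = (l₁ ++ [y]).head? := by rw [e]; cases l₁ <;> simp
        rw [← this, hLdef] at ha
        simpa using ha.symm
      have h2 : b = z := by
        rw [List.head?_reverse] at hb
        have : L.getLast? = (x :: l₂).getLast? := by
          rw [e]
          have h2 : l₁ ++ y :: x :: l₂ = (l₁ ++ [y]) ++ (x :: l₂) := by simp
          rw [h2, List.getLast?_append_of_ne_nil _ (by simp)]
        rw [← this, hLdef, ← List.cons_append, List.getLast?_append_of_ne_nil _ (by simp)] at hb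
        simpa using hb.symm
      rw [h1, h2]
      exact hz
    obtain ⟨c', hc'⟩ := lemA hd hch' (hperm.nodup_iff.2 hL2)
      (fun v hv => hdis v (hperm.mem_iff.1 hv)) hc (fun v hv hv' => hy ⟨v, hv, hv'⟩) hu hxu
      hsp.2.1.symm
    rw [List.toFinset_eq_of_perm _ _ hperm, hun] at hc'
    exact ⟨c', hc'⟩

theorem greedy {k : ℕ} (hk : ∀ v, G.degree v < k) (hk0 : 0 < k) :
    ∀ S : Finset V, ∃ c : V → Fin k, PropOn G c S := by
  intro S
  induction S using Finset.induction_on with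
  | empty => exact ⟨fun _ => ⟨0, hk0⟩, by simp [PropOn]⟩
  | insert v S hv ih =>
    obtain ⟨c, hc⟩ := ih
    obtain ⟨i, hi⟩ := free_of (G := G) (c := c) (T := S) (x := v) (G.neighborFinset v)
      (by rw [G.card_neighborFinset_eq_degree]; exact hk v)
      (fun u _ hvu => Finset.mem_image_of_mem c (by simpa using hvu))
    exact ⟨_, propOn_update hc hi⟩

lemma chrom_le {k n : ℕ} (h : ∃ c : V → Fin k, PropOn G c Finset.univ) (hkn : k ≤ n) :
    G.chromaticNumber ≤ (n : ℕ) := by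
  obtain ⟨c, hc⟩ := h
  have h1 : G.Colorable k :=
    ⟨SimpleGraph.Coloring.mk c fun {a b} hab => hc a (by simp) b (by simp) hab⟩
  exact (h1.mono hkn).chromaticNumber_le

end

end ReedPW

/-- **Reed's conjecture for triangle-free graphs holds on graphs of pathwidth at most 5.**
Every finite simple triangle-free graph admitting a path decomposition of width at most 5
satisfies `χ(G) ≤ ⌈(Δ(G) + 3) / 2⌉`.  (For a natural number `Δ`,
`⌈(Δ + 3) / 2⌉ = (Δ + 4) / 2` with natural-number division.) -/
theorem stmt_8 {V : Type*} [Fintype V] [DecidableEq V] (G : SimpleGraph V)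
    [DecidableRel G.Adj] (htf : G.CliqueFree 3) (hpw : HasPathDecompOfWidth G 5) :
    G.chromaticNumber ≤ ((G.maxDegree + 4) / 2 : ℕ) := by
  have hd := G.degree_le_maxDegree
  rcases Nat.lt_or_ge G.maxDegree 2 with h | h
  · exact ReedPW.chrom_le (ReedPW.greedy (k := 2) (fun v => (hd v).trans_lt h) (by omega) _)
      (by omega)
  rcases Nat.lt_or_ge G.maxDegree 4 with h' | h'
  · exact ReedPW.chrom_le (ReedPW.three_col htf (fun v => (hd v).trans (by omega)) _) (by omega)
  · exact ReedPW.chrom_le (ReedPW.four_col G htf hpw) (by omega)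
end

section
/- Every simple triangle-free graph that admits a path decomposition of width at most 3 has chromatic number at most 3. -/
namespace PW3

variable {V : Type*} [DecidableEq V]

def ProperOn (G : SimpleGraph V) (f : V → Fin 3) (A : Finset V) : Prop :=
  ∀ a ∈ A, ∀ b ∈ A, G.Adj a b → f a ≠ f b

/-- A colouring of the boundary `A` is good unless `A` is a rainbow independent triple. -/
def Good (G : SimpleGraph V) (f : V → Fin 3) (A : Finset V) : Prop :=
  (∃ a ∈ A, ∃ b ∈ A, G.Adj a b) ∨ (∃ a ∈ A, ∃ b ∈ A, a ≠ b ∧ f a = f b) ∨ A.card < 3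

/-- Every good proper colouring of `A` extends to `S`. -/
def Ext (G : SimpleGraph V) (S A : Finset V) : Prop :=
  ∀ f : V → Fin 3, ProperOn G f A → Good G f A → ∃ g, ProperOn G g S ∧ ∀ a ∈ A, g a = f a

lemma greedy (f : V → Fin 3) (T : Finset V)
    (h : T.card < 3 ∨ (T.card ≤ 3 ∧ ∃ a ∈ T, ∃ b ∈ T, a ≠ b ∧ f a = f b)) :
    ∃ c : Fin 3, ∀ a ∈ T, f a ≠ c := by
  have hc : (T.image f).card < 3 := by
    rcases h with h | ⟨h, a, ha, b, hb, hab, hf⟩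
    · exact lt_of_le_of_lt Finset.card_image_le h
    · have : T.image f ⊆ (T.erase a).image f := by
        intro c hc
        obtain ⟨x, hx, rfl⟩ := Finset.mem_image.1 hc
        by_cases hxa : x = a
        · subst hxa
          exact Finset.mem_image.2 ⟨b, Finset.mem_erase.2 ⟨hab.symm, hb⟩, hf.symm⟩
        · exact Finset.mem_image.2 ⟨x, Finset.mem_erase.2 ⟨hxa, hx⟩, rfl⟩
      have h1 := Finset.card_le_card this
      have h2 := Finset.card_image_le (s := T.erase a) (f := f)
      have h3 := Finset.card_erase_lt_of_mem ha
      omega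
  by_contra! hcon
  have : T.image f = Finset.univ := by
    ext c
    obtain ⟨a, ha, hac⟩ := hcon c
    simp only [Finset.mem_image, Finset.mem_univ, iff_true]
    exact ⟨a, ha, hac⟩
  rw [this] at hc
  simp at hc

lemma proper_update (G : SimpleGraph V) (f : V → Fin 3) (A : Finset V) (x : V) (c : Fin 3)
    (hf : ProperOn G f A) (hc : ∀ a ∈ A, G.Adj x a → f a ≠ c) :
    ProperOn G (Function.update f x c) (insert x A) := by
  intro a ha b hb hab
  have hne := hab.ne
  by_cases hax : a = x
  · subst hax
    have hb' : b ∈ A := by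
      rcases Finset.mem_insert.1 hb with h | h
      · exact absurd h.symm hne
      · exact h
    rw [Function.update_self, Function.update_of_ne hne.symm]
    exact (hc b hb' hab).symm
  · have ha' : a ∈ A := (Finset.mem_insert.1 ha).resolve_left hax
    rw [Function.update_of_ne hax]
    by_cases hbx : b = x
    · subst hbx
      rw [Function.update_self]
      exact hc a ha' hab.symm
    · rw [Function.update_of_ne hbx]
      exact hf a ha' b ((Finset.mem_insert.1 hb).resolve_left hbx) hab

lemma ProperOn.mono {G : SimpleGraph V} {f : V → Fin 3} {A B : Finset V}
    (h : ProperOn G f B) (hAB : A ⊆ B) : ProperOn G f A :=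
  fun a ha b hb => h a (hAB ha) b (hAB hb)

/-- Forgetting one vertex. -/
lemma ext_forget (G : SimpleGraph V) (S A : Finset V) (x : V) (hx : x ∉ A)
    (hcard : (insert x A).card ≤ 3) (h : Ext G S (insert x A)) : Ext G S A := by
  intro f hf _
  rw [Finset.card_insert_of_notMem hx] at hcard
  suffices H : ∃ c : Fin 3, (∀ a ∈ A, G.Adj x a → f a ≠ c) ∧
      Good G (Function.update f x c) (insert x A) by
    obtain ⟨c, hc, hg⟩ := H
    obtain ⟨g, hg1, hg2⟩ := h _ (proper_update G f A x c hf hc) hg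
    refine ⟨g, hg1, fun a ha => ?_⟩
    rw [hg2 a (Finset.mem_insert_of_mem ha),
      Function.update_of_ne (show a ≠ x from fun h => hx (h ▸ ha))]
  by_cases he : ∃ a ∈ insert x A, ∃ b ∈ insert x A, G.Adj a b
  · obtain ⟨c, hc⟩ := greedy f A (Or.inl (by omega))
    exact ⟨c, fun a ha _ => hc a ha, Or.inl he⟩
  · push Not at he
    rcases A.eq_empty_or_nonempty with rfl | ⟨a, ha⟩
    · exact ⟨0, by simp, Or.inr (Or.inr (by simp))⟩
    · have hxa : a ≠ x := fun h => hx (h ▸ ha)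
      refine ⟨f a, fun b hb hxb => absurd hxb
        (he x (Finset.mem_insert_self _ _) b (Finset.mem_insert_of_mem hb)), Or.inr (Or.inl
        ⟨x, Finset.mem_insert_self _ _, a, Finset.mem_insert_of_mem ha, hxa.symm, ?_⟩)⟩
      rw [Function.update_self, Function.update_of_ne hxa]

lemma ext_mono (G : SimpleGraph V) (S A B : Finset V) (hAB : A ⊆ B) (hcard : B.card ≤ 3)
    (h : Ext G S B) : Ext G S A := by
  induction hn : (B \ A).card generalizing B with
  | zero =>
    have : B ⊆ A := by
      rw [Finset.card_eq_zero] at hn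
      exact Finset.sdiff_eq_empty_iff_subset.1 hn
    rwa [hAB.antisymm this]
  | succ n ih =>
    have hne : (B \ A).Nonempty := by
      rw [← Finset.card_pos]; omega
    obtain ⟨x, hx⟩ := hne
    obtain ⟨hxB, hxA⟩ := Finset.mem_sdiff.1 hx
    have hins := Finset.insert_erase hxB
    refine ih (B.erase x) (fun a ha => Finset.mem_erase.2 ⟨fun h => hxA (h ▸ ha), hAB ha⟩)
      ((Finset.card_le_card (Finset.erase_subset _ _)).trans hcard)
      (ext_forget G S _ x (Finset.notMem_erase _ _) (by rwa [hins]) (by rwa [hins])) ?_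
    have : B.erase x \ A = (B \ A).erase x := by
      ext y; simp only [Finset.mem_sdiff, Finset.mem_erase]; tauto
    rw [this, Finset.card_erase_of_mem hx, hn]; rfl

/-- Extending a colouring of `S` to a new vertex `v`. -/
lemma ext_add (G : SimpleGraph V) (S A : Finset V) (v : V) (hv : v ∉ S) (hAS : A ⊆ S)
    (hN : ∀ u ∈ S, G.Adj v u → u ∈ A) (h : Ext G S A) (f : V → Fin 3)
    (hf : ProperOn G f (insert v A)) (hg : Good G f A) :
    ∃ g, ProperOn G g (insert v S) ∧ ∀ a ∈ insert v A, g a = f a := by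
  obtain ⟨g, hg1, hg2⟩ := h f (hf.mono (Finset.subset_insert _ _)) hg
  refine ⟨Function.update g v (f v), proper_update G g S v _ hg1 ?_, ?_⟩
  · intro a ha hva
    have haA := hN a ha hva
    rw [hg2 a haA]
    exact hf a (Finset.mem_insert_of_mem haA) v (Finset.mem_insert_self _ _) hva.symm
  · intro a ha
    by_cases hav : a = v
    · subst hav; simp
    · rw [Function.update_of_ne hav]
      exact hg2 a ((Finset.mem_insert.1 ha).resolve_left hav)

lemma no_triangle {G : SimpleGraph V} (htf : G.CliqueFree 3) {a b c : V}
    (h1 : G.Adj a b) (h2 : G.Adj a c) (h3 : G.Adj b c) : False :=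
  htf {a, b, c} (SimpleGraph.is3Clique_triple_iff.2 ⟨h1, h2, h3⟩)

lemma color_new (G : SimpleGraph V) (htf : G.CliqueFree 3) (f : V → Fin 3) (A : Finset V)
    (x : V) (hcard : A.card ≤ 3) (hg : Good G f A) :
    ∃ c : Fin 3, ∀ a ∈ A, G.Adj x a → f a ≠ c := by
  classical
  by_cases hall : ∀ a ∈ A, G.Adj x a
  · have : ∃ c : Fin 3, ∀ a ∈ A, f a ≠ c := by
      apply greedy
      rcases hg with ⟨a, ha, b, hb, hab⟩ | h | h
      · exact (no_triangle htf (hall a ha) (hall b hb) hab).elim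
      · exact Or.inr ⟨hcard, h⟩
      · exact Or.inl h
    obtain ⟨c, hc⟩ := this
    exact ⟨c, fun a ha _ => hc a ha⟩
  · push Not at hall
    obtain ⟨y, hy, hxy⟩ := hall
    obtain ⟨c, hc⟩ := greedy f (A.erase y) (Or.inl (by
      have := Finset.card_erase_lt_of_mem hy; omega))
    exact ⟨c, fun a ha hxa => hc a (Finset.mem_erase.2 ⟨fun h => hxy (h ▸ hxa), ha⟩)⟩

lemma ext_step (G : SimpleGraph V) (htf : G.CliqueFree 3) (S A A' : Finset V) (v : V)
    (hv : v ∉ S) (hAS : A ⊆ S) (hcard : A.card ≤ 3)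
    (hN : ∀ u ∈ S, G.Adj v u → u ∈ A) (h : Ext G S A)
    (hA' : A' ⊆ insert v A) (hcard' : A'.card ≤ 3) : Ext G (insert v S) A' := by
  have hvA : v ∉ A := fun h => hv (hAS h)
  by_cases h3 : A.card < 3
  · refine ext_mono G _ A' (insert v A) hA' (by
      rw [Finset.card_insert_of_notMem hvA]; omega) ?_
    intro f hf _
    exact ext_add G S A v hv hAS hN h f hf (Or.inr (Or.inr h3))
  have hA3 : A.card = 3 := by omega
  have hB : (insert v A).card = 4 := by rw [Finset.card_insert_of_notMem hvA]; omega
  obtain ⟨x, hxB, hxA'⟩ : ∃ x ∈ insert v A, x ∉ A' := by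
    by_contra! hcon
    have := Finset.card_le_card (show insert v A ⊆ A' from hcon)
    omega
  refine ext_mono G _ A' ((insert v A).erase x)
    (fun a ha => Finset.mem_erase.2 ⟨fun h => hxA' (h ▸ ha), hA' ha⟩)
    (by rw [Finset.card_erase_of_mem hxB]; omega) ?_
  intro f hf hgood
  have hCcard : ((insert v A).erase x).card = 3 := by rw [Finset.card_erase_of_mem hxB]; omega
  have hins := Finset.insert_erase hxB
  -- it suffices to colour `x`
  suffices H : ∃ c : Fin 3, (∀ a ∈ (insert v A).erase x, G.Adj x a → f a ≠ c) ∧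
      Good G (Function.update f x c) A by
    obtain ⟨c, hc, hg⟩ := H
    have hp := proper_update G f _ x c hf hc
    rw [hins] at hp
    obtain ⟨g, hg1, hg2⟩ := ext_add G S A v hv hAS hN h _ hp hg
    refine ⟨g, hg1, fun a ha => ?_⟩
    rw [hg2 a (Finset.mem_of_mem_erase ha), Function.update_of_ne (Finset.ne_of_mem_erase ha)]
  by_cases hxv : x = v
  · subst hxv
    rw [Finset.erase_insert hvA] at hgood ⊢
    obtain ⟨c, hc⟩ := color_new G htf f A x hcard hgood
    refine ⟨c, hc, ?_⟩
    rcases hgood with h | ⟨a, ha, b, hb, hab, he⟩ | h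
    · exact Or.inl h
    · refine Or.inr (Or.inl ⟨a, ha, b, hb, hab, ?_⟩)
      rwa [Function.update_of_ne (show a ≠ x from fun h => hvA (h ▸ ha)),
        Function.update_of_ne (show b ≠ x from fun h => hvA (h ▸ hb))]
    · exact Or.inr (Or.inr h)
  have hxA : x ∈ A := (Finset.mem_insert.1 hxB).resolve_left hxv
  by_cases he : ∃ a ∈ A, ∃ b ∈ A, G.Adj a b
  · obtain ⟨c, hc⟩ := color_new G htf f _ x hCcard.le hgood
    exact ⟨c, hc, Or.inl he⟩
  push Not at he
  -- `A` is independent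
  have hE : (A.erase x).card = 2 := by rw [Finset.card_erase_of_mem hxA]; omega
  obtain ⟨a, b, hab, hEab⟩ := Finset.card_eq_two.1 hE
  have ha : a ∈ A.erase x := by rw [hEab]; simp
  have hb : b ∈ A.erase x := by rw [hEab]; simp
  obtain ⟨hax, haA⟩ := Finset.mem_erase.1 ha
  obtain ⟨hbx, hbA⟩ := Finset.mem_erase.1 hb
  have key : ∀ c : Fin 3, c ≠ f v →
      ∀ y ∈ (insert v A).erase x, G.Adj x y → f y ≠ c := by
    intro c hc y hy hxy
    rcases Finset.mem_insert.1 (Finset.mem_of_mem_erase hy) with rfl | hyA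
    · exact hc.symm
    · exact absurd hxy (he x hxA y hyA)
  by_cases hfab : f a = f b
  · obtain ⟨c, hc⟩ := exists_ne (f v)
    refine ⟨c, key c hc, Or.inr (Or.inl ⟨a, haA, b, hbA, hab, ?_⟩)⟩
    rwa [Function.update_of_ne hax, Function.update_of_ne hbx]
  · by_cases hfa : f a = f v
    · refine ⟨f b, key _ (fun h => hfab (hfa.trans h.symm)),
        Or.inr (Or.inl ⟨b, hbA, x, hxA, hbx, ?_⟩)⟩
      rw [Function.update_of_ne hbx, Function.update_self]
    · refine ⟨f a, key _ hfa, Or.inr (Or.inl ⟨a, haA, x, hxA, hax, ?_⟩)⟩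
      rw [Function.update_of_ne hax, Function.update_self]

lemma main_ind (G : SimpleGraph V) (htf : G.CliqueFree 3) (Bag : ℕ → Finset V) (l : V → ℕ)
    (hl : ∀ v, v ∈ Bag (l v)) (hmin : ∀ v i, v ∈ Bag i → l v ≤ i)
    (hE : ∀ u v, G.Adj u v → ∃ i, u ∈ Bag i ∧ v ∈ Bag i)
    (hC : ∀ v i j k, i ≤ j → j ≤ k → v ∈ Bag i → v ∈ Bag k → v ∈ Bag j)
    (hw : ∀ i, (Bag i).card ≤ 4) (S : Finset V) :
    ∀ t, (∀ u ∈ S, l u ≤ t) → (S.filter (· ∈ Bag t)).card ≤ 3 →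
      Ext G S (S.filter (· ∈ Bag t)) := by
  induction S using Finset.induction_on_max_value l with
  | empty =>
    intro t _ _ f hf _
    exact ⟨f, by intro a ha; simp at ha, fun _ _ => rfl⟩
  | insert v S hv hmax ih =>
    intro t ht hcard
    have hc : (S.filter (· ∈ Bag (l v))).card ≤ 3 := by
      have h1 : S.filter (· ∈ Bag (l v)) ⊆ (Bag (l v)).erase v := by
        intro u hu
        obtain ⟨h1, h2⟩ := Finset.mem_filter.1 hu
        exact Finset.mem_erase.2 ⟨fun h => hv (h ▸ h1), h2⟩
      have h2 := Finset.card_le_card h1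
      rw [Finset.card_erase_of_mem (hl v)] at h2
      have := hw (l v)
      omega
    refine ext_step G htf S _ _ v hv (Finset.filter_subset _ _) hc ?_ (ih (l v) hmax hc) ?_ hcard
    · intro u hu hvu
      obtain ⟨i, hvi, hui⟩ := hE v u hvu
      exact Finset.mem_filter.2 ⟨hu, hC u _ _ _ (hmax u hu) (hmin v i hvi) (hl u) hui⟩
    · intro u hu
      obtain ⟨h1, h2⟩ := Finset.mem_filter.1 hu
      rcases Finset.mem_insert.1 h1 with rfl | h1
      · exact Finset.mem_insert_self _ _
      · exact Finset.mem_insert_of_mem (Finset.mem_filter.2 ⟨h1,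
          hC u _ _ _ (hmax u h1) (ht v (Finset.mem_insert_self _ _)) (hl u) h2⟩)

end PW3

/-- Every simple triangle-free graph that admits a path decomposition of width at most 3
has chromatic number at most 3. -/
theorem stmt_11 {V : Type*} [DecidableEq V] (G : SimpleGraph V)
    (htf : G.CliqueFree 3) (hpw : HasPathDecompOfWidth G 3) :
    G.chromaticNumber ≤ 3 := by
  classical
  obtain ⟨m, Bag, hV, hE, hC, hw⟩ := hpw
  let B : ℕ → Finset V := fun i => if h : i < m then Bag ⟨i, h⟩ else ∅
  have hB : ∀ v i, v ∈ B i ↔ ∃ h : i < m, v ∈ Bag ⟨i, h⟩ := by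
    intro v i
    by_cases h : i < m <;> simp [B, h]
  have hex : ∀ v, ∃ i, v ∈ B i := by
    intro v
    obtain ⟨i, hi⟩ := hV v
    exact ⟨i, (hB v i).2 ⟨i.2, hi⟩⟩
  let S : Finset V := Finset.univ.biUnion Bag
  have hS : ∀ v, v ∈ S := by
    intro v
    obtain ⟨i, hi⟩ := hV v
    exact Finset.mem_biUnion.2 ⟨i, Finset.mem_univ _, hi⟩
  have hempty : S.filter (· ∈ B m) = ∅ := by
    ext v
    simp [B]
  have key := PW3.main_ind G htf B (fun v => Nat.find (hex v)) (fun v => Nat.find_spec (hex v))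
    (fun v i hi => Nat.find_min' (hex v) hi)
    (fun u v huv => by
      obtain ⟨i, hu, hv⟩ := hE u v huv
      exact ⟨i, (hB u i).2 ⟨i.2, hu⟩, (hB v i).2 ⟨i.2, hv⟩⟩)
    (fun v i j k hij hjk hi hk => by
      obtain ⟨hi1, hi2⟩ := (hB v i).1 hi
      obtain ⟨hk1, hk2⟩ := (hB v k).1 hk
      exact (hB v j).2 ⟨lt_of_le_of_lt hjk hk1, hC v ⟨i, hi1⟩ ⟨j, _⟩ ⟨k, hk1⟩ hij hjk hi2 hk2⟩)
    (fun i => by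
      by_cases h : i < m
      · simpa [B, h] using hw ⟨i, h⟩
      · simp [B, h])
    S m
    (fun u _ => by
      obtain ⟨h, _⟩ := (hB u _).1 (Nat.find_spec (hex u))
      exact h.le)
    (by rw [hempty]; simp)
  rw [hempty] at key
  obtain ⟨g, hg, _⟩ := key (fun _ => 0) (by intro a ha; simp at ha) (Or.inr (Or.inr (by simp)))
  have hcol : G.Colorable 3 :=
    ⟨SimpleGraph.Coloring.mk g (fun {u v} huv => hg u (hS u) v (hS v) huv)⟩
  exact_mod_cast hcol.chromaticNumber_le
end

section
/- There exists a finite simple triangle-free graph with exactly 14 vertices and 27 edges that has chromatic number 4, admits a path decomposition of width at most 4, and admits no path decomposition of width at most 3 (i.e., it has pathwidth exactly 4). -/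
/-- Neighbourhoods of the 14 vertices, as bit masks. -/
def nbMask (u : Fin 14) : ℕ :=
  (![28, 13080, 11585, 35, 195, 968, 52, 13360, 38, 3106, 644, 4612, 2178, 134] : Fin 14 → ℕ) u

/-- The adjacency test. -/
def adjB (u v : Fin 14) : Bool := (nbMask u).testBit v.val

/-- The 4-chromatic triangle-free graph of pathwidth 4. -/
def theG : SimpleGraph (Fin 14) where
  Adj u v := adjB u v = true
  symm := ⟨by decide +kernel⟩
  loopless := ⟨by decide +kernel⟩

instance : DecidableRel theG.Adj := fun u v => inferInstanceAs (Decidable (adjB u v = true))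

/-- The bags of a path decomposition of width 4. -/
def theBags : Fin 11 → Finset (Fin 14) :=
  ![{0, 2, 1, 3}, {0, 3, 2, 1, 4}, {1, 3, 4, 2, 5}, {1, 4, 5, 2, 6}, {4, 1, 2, 5, 7}, {5, 7, 2, 1, 8}, {5, 7, 2, 1, 9}, {1, 9, 2, 7, 10}, {9, 1, 7, 2, 11}, {11, 2, 1, 7, 12}, {11, 2, 1, 7, 13}]

theorem theG_edges : theG.edgeSet.ncard = 27 := by
  rw [Set.ncard_eq_toFinset_card']
  decide +kernel

theorem theG_cliqueFree : theG.CliqueFree 3 := by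
  intro s hs
  rw [SimpleGraph.is3Clique_iff] at hs
  obtain ⟨a, b, c, hab, hac, hbc, -⟩ := hs
  have key : ∀ a b : Fin 14, adjB a b = true → ∀ c, adjB a c = true → adjB b c = true → False := by
    decide +kernel
  exact key a b hab c hac hbc

set_option synthInstance.maxHeartbeats 400000 in
set_option synthInstance.maxSize 4000 in
set_option maxRecDepth 10000 in
theorem no_three_col : ∀ c0 : Fin 3, ∀ c1 : Fin 3, ∀ c2 : Fin 3, c0 ≠ c2 → ∀ c3 : Fin 3, c0 ≠ c3 ∧ c1 ≠ c3 → 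
    ∀ c4 : Fin 3, c0 ≠ c4 ∧ c1 ≠ c4 → ∀ c5 : Fin 3, c3 ≠ c5 → 
    ∀ c6 : Fin 3, c4 ≠ c6 ∧ c5 ≠ c6 ∧ c2 ≠ c6 → ∀ c7 : Fin 3, c4 ≠ c7 ∧ c5 ≠ c7 → 
    ∀ c8 : Fin 3, c5 ≠ c8 ∧ c2 ≠ c8 ∧ c1 ≠ c8 → ∀ c9 : Fin 3, c5 ≠ c9 ∧ c1 ≠ c9 → 
    ∀ c10 : Fin 3, c9 ≠ c10 ∧ c2 ≠ c10 ∧ c7 ≠ c10 → ∀ c11 : Fin 3, c9 ≠ c11 ∧ c2 ≠ c11 → 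
    ∀ c12 : Fin 3, c11 ≠ c12 ∧ c1 ≠ c12 ∧ c7 ≠ c12 → ∀ c13 : Fin 3, c2 ≠ c13 ∧ c1 ≠ c13 ∧ c7 ≠ c13 → 
    False := by
  decide +kernel

theorem theG_not3 : ¬ theG.Colorable 3 := by
  rintro ⟨C⟩
  have h : ∀ u v : Fin 14, adjB u v = true → C u ≠ C v := fun u v huv => C.valid huv
  exact no_three_col (C 0) (C 1) (C 2) (h 0 2 rfl) (C 3) ⟨h 0 3 rfl, h 1 3 rfl⟩ (C 4) ⟨h 0 4 rfl, h 1 4 rfl⟩ (C 5) (h 3 5 rfl) (C 6) ⟨h 4 6 rfl, h 5 6 rfl, h 2 6 rfl⟩ (C 7) ⟨h 4 7 rfl, h 5 7 rfl⟩ (C 8) ⟨h 5 8 rfl, h 2 8 rfl, h 1 8 rfl⟩ (C 9) ⟨h 5 9 rfl, h 1 9 rfl⟩ (C 10) ⟨h 9 10 rfl, h 2 10 rfl, h 7 10 rfl⟩ (C 11) ⟨h 9 11 rfl, h 2 11 rfl⟩ (C 12) ⟨h 11 12 rfl, h 1 12 rfl, h 7 12 rfl⟩ (C 13) ⟨h 2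 13 rfl, h 1 13 rfl, h 7 13 rfl⟩

theorem theG_pw4 : HasPathDecompOfWidth theG 4 := by
  refine ⟨11, theBags, ?_, ?_, ?_, ?_⟩
  · decide +kernel
  · change ∀ u v : Fin 14, adjB u v = true → _
    decide +kernel
  · decide +kernel
  · decide +kernel

/-- Every 5-set of vertices has at least four vertices with a neighbour outside of it. -/
theorem five_sets : ∀ a b : Fin 14, a < b → ∀ c, b < c → ∀ d, c < d → ∀ e, d < e →
    4 ≤ ([a, b, c, d, e].filter fun v =>
      decide (∃ w, adjB v w = true ∧ w ∉ [a, b, c, d, e])).length := by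
  decide +kernel

theorem exists_lower {m : ℕ} (f : Fin 14 → Fin m) (k : ℕ) (hk : k ≤ 14) :
    ∃ S : Finset (Fin 14), S.card = k ∧ ∀ v ∈ S, ∀ w ∉ S, f v ≤ f w := by
  induction k with
  | zero => exact ⟨∅, by simp, by simp⟩
  | succ k ih =>
    obtain ⟨S, hS, hl⟩ := ih (by omega)
    have hne : (Sᶜ).Nonempty := by
      rw [← Finset.card_pos, Finset.card_compl, Fintype.card_fin]; omega
    obtain ⟨x, hx, hmin⟩ := Finset.exists_min_image Sᶜ f hne
    rw [Finset.mem_compl] at hx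
    refine ⟨insert x S, by rw [Finset.card_insert_of_notMem hx, hS], ?_⟩
    intro v hv w hw
    rw [Finset.mem_insert, not_or] at hw
    rcases Finset.mem_insert.1 hv with rfl | hv
    · exact hmin w (Finset.mem_compl.2 hw.2)
    · exact hl v hv w hw.2

theorem theG_boundary (S : Finset (Fin 14)) (hS : S.card = 5) :
    4 ≤ (S.filter fun v => ∃ w, theG.Adj v w ∧ w ∉ S).card := by
  let o := S.orderEmbOfFin hS
  have lt : ∀ i j : Fin 5, i < j → o i < o j := fun i j h => o.strictMono h
  have key := five_sets (o 0) (o 1) (lt _ _ (by decide)) (o 2) (lt _ _ (by decide))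
    (o 3) (lt _ _ (by decide)) (o 4) (lt _ _ (by decide))
  have hmem : ∀ x, x ∈ S ↔ x ∈ [o 0, o 1, o 2, o 3, o 4] := by
    intro x
    have : x ∈ S ↔ ∃ i, o i = x := by
      rw [← Set.mem_range, S.range_orderEmbOfFin hS]; rfl
    rw [this]
    simp only [Fin.exists_fin_succ, List.mem_cons, List.not_mem_nil, or_false]
    constructor
    · rintro (h | h | h | h | h | ⟨i, -⟩)
      · exact Or.inl h.symm
      · exact Or.inr (Or.inl h.symm)
      · exact Or.inr (Or.inr (Or.inl h.symm))
      · exact Or.inr (Or.inr (Or.inr (Or.inl h.symm)))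
      · exact Or.inr (Or.inr (Or.inr (Or.inr h.symm)))
      · exact i.elim0
    · rintro (h | h | h | h | h)
      · exact Or.inl h.symm
      · exact Or.inr (Or.inl h.symm)
      · exact Or.inr (Or.inr (Or.inl h.symm))
      · exact Or.inr (Or.inr (Or.inr (Or.inl h.symm)))
      · exact Or.inr (Or.inr (Or.inr (Or.inr (Or.inl h.symm))))
  have hnd : [o 0, o 1, o 2, o 3, o 4].Nodup := by
    have : [o 0, o 1, o 2, o 3, o 4] = ([0, 1, 2, 3, 4] : List (Fin 5)).map o := rfl
    rw [this]
    exact (by decide : ([0, 1, 2, 3, 4] : List (Fin 5)).Nodup).map o.injective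
  rw [← List.toFinset_card_of_nodup (hnd.filter _)] at key
  refine key.trans (Finset.card_le_card ?_)
  intro x hx
  rw [List.mem_toFinset, List.mem_filter, decide_eq_true_eq] at hx
  obtain ⟨hx, w, hw, hn⟩ := hx
  exact Finset.mem_filter.2 ⟨(hmem x).2 hx, w, hw, fun h => hn ((hmem w).1 h)⟩

theorem theG_not_pw3 : ¬ HasPathDecompOfWidth theG 3 := by
  rintro ⟨m, Bag, hV, hE, hC, hW⟩
  have hfirst : ∀ v, ∃ i, v ∈ Bag i ∧ ∀ j, v ∈ Bag j → i ≤ j := by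
    intro v
    obtain ⟨i0, hi0⟩ := hV v
    obtain ⟨i, hi, hmin⟩ := Finset.exists_min_image
      (Finset.univ.filter fun i => v ∈ Bag i) id ⟨i0, by simpa using hi0⟩
    exact ⟨i, by simpa using hi, fun j hj => hmin j (by simpa using hj)⟩
  choose f hf hfmin using hfirst
  obtain ⟨S, hS, hl⟩ := exists_lower f 5 (by norm_num)
  have hne : (Sᶜ).Nonempty := by
    rw [← Finset.card_pos, Finset.card_compl, Fintype.card_fin]; omega
  obtain ⟨x, hx, hmin⟩ := Finset.exists_min_image Sᶜ f hne
  rw [Finset.mem_compl] at hx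
  have hsub : insert x (S.filter fun v => ∃ w, theG.Adj v w ∧ w ∉ S) ⊆ Bag (f x) := by
    intro v hv
    rcases Finset.mem_insert.1 hv with rfl | hv
    · exact hf v
    · obtain ⟨hvS, w, hvw, hwS⟩ := Finset.mem_filter.1 hv
      obtain ⟨i, hvi, hwi⟩ := hE v w hvw
      exact hC v (f v) (f x) i (hl v hvS x hx)
        ((hmin w (Finset.mem_compl.2 hwS)).trans (hfmin w i hwi)) (hf v) hvi
  have h1 := Finset.card_le_card hsub
  rw [Finset.card_insert_of_notMem (fun h => hx (Finset.mem_filter.1 h).1)] at h1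
  have h2 := theG_boundary S hS
  have h3 := hW (f x)
  omega

theorem theG_col4 : theG.Colorable 4 := by
  refine ⟨SimpleGraph.Coloring.mk (![0, 0, 1, 1, 1, 0, 2, 2, 2, 1, 0, 0, 1, 3] : Fin 14 → Fin 4) ?_⟩
  intro u v h
  have key : ∀ u v : Fin 14, adjB u v = true →
      (![0, 0, 1, 1, 1, 0, 2, 2, 2, 1, 0, 0, 1, 3] : Fin 14 → Fin 4) u ≠ (![0, 0, 1, 1, 1, 0, 2, 2, 2, 1, 0, 0, 1, 3] : Fin 14 → Fin 4) v := by
    decide +kernel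
  exact key u v h

theorem theG_chrom : theG.chromaticNumber = 4 := by
  apply le_antisymm
  · exact theG_col4.chromaticNumber_le
  · by_contra hlt
    rw [not_le] at hlt
    have h3 : theG.chromaticNumber ≤ 3 := Order.le_of_lt_add_one (by norm_num; exact hlt)
    exact theG_not3 (SimpleGraph.chromaticNumber_le_iff_colorable.1 h3)

/-- There exists a finite simple triangle-free graph with exactly 14 vertices and
27 edges that has chromatic number 4, admits a path decomposition of width at most 4,
and admits no path decomposition of width at most 3 (i.e., it has pathwidth exactly 4). -/
theorem stmt_12 :
    ∃ G : SimpleGraph (Fin 14),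
      G.edgeSet.ncard = 27 ∧ G.CliqueFree 3 ∧ G.chromaticNumber = 4 ∧
      HasPathDecompOfWidth G 4 ∧ ¬ HasPathDecompOfWidth G 3 := by
  exact ⟨theG, theG_edges, theG_cliqueFree, theG_chrom, theG_pw4, theG_not_pw3⟩
end

section
/- There exists a finite simple triangle-free graph with exactly 22 vertices that has maximum degree 4, chromatic number 4, admits a path decomposition of width at most 4, and admits no path decomposition of width at most 3 (i.e., it has pathwidth exactly 4). -/
namespace Stmt13

/-- Edge list of the graph. -/
def edges : List (ℕ × ℕ) :=
  [(0, 1), (0, 4), (0, 5), (1, 6), (1, 7), (2, 4), (2, 6), (2, 7), (2, 8), (3, 4), (3, 6),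
   (3, 9), (5, 6), (5, 9), (5, 11), (7, 9), (7, 11), (8, 9), (8, 13), (8, 14), (10, 13),
   (10, 16), (10, 17), (10, 18), (11, 13), (11, 14), (12, 13), (12, 16), (12, 19), (12, 20),
   (14, 16), (14, 17), (15, 16), (15, 19), (15, 21), (17, 19), (17, 20), (18, 19), (18, 21),
   (20, 21)]

/-- Boolean adjacency. -/
def adjB (u v : Fin 22) : Bool :=
  edges.any fun e => (e.1 == u.val && e.2 == v.val) || (e.1 == v.val && e.2 == u.val)

/-- The graph. -/
def G : SimpleGraph (Fin 22) where
  Adj u v := adjB u v = true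
  symm := ⟨by decide +kernel⟩
  loopless := ⟨by decide +kernel⟩

instance : DecidableRel G.Adj := fun u v => inferInstanceAs (Decidable (adjB u v = true))

theorem cliqueFree : G.CliqueFree 3 := by
  intro s hs
  rw [SimpleGraph.is3Clique_iff] at hs
  obtain ⟨a, b, c, hab, hac, hbc, -⟩ := hs
  have key : ∀ a b : Fin 22, adjB a b = true → ∀ c, adjB a c = true → adjB b c = true →
      False := by decide +kernel
  exact key a b hab c hac hbc

theorem ncard_eq (v : Fin 22) :
    (G.neighborSet v).ncard = (Finset.univ.filter fun w => adjB v w = true).card := by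
  rw [← Set.ncard_coe_finset]
  congr 1
  ext w
  simp [G]

theorem colorable_four : G.Colorable 4 := by
  let f : Fin 22 → Fin 4 :=
    ![0, 1, 0, 0, 1, 1, 2, 2, 1, 3, 0, 0, 0, 2, 2, 0, 1, 1, 1, 2, 2, 3]
  have hf : ∀ u v : Fin 22, adjB u v = true → f u ≠ f v := by decide +kernel
  exact ⟨SimpleGraph.Coloring.mk f fun {u v} h => hf u v h⟩

/-- For each vertex `n`, its smaller neighbors `u`, encoded as `n - 1 - u`. -/
def back : List (List ℕ) :=
  [[], [0], [], [], [3, 1, 0], [4], [4, 3, 2, 0], [5, 4], [5], [5, 3, 1, 0], [], [5, 3], [],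
   [4, 2, 1, 0], [5, 2], [], [5, 3, 1, 0], [6, 2], [7], [6, 3, 1, 0], [7, 2], [5, 2, 0]]

/-- Backtracking search for a proper 3-coloring extending the reversed prefix `c`. -/
def search : List (List ℕ) → List ℕ → Bool
  | [], _ => true
  | b :: bs, c =>
    [0, 1, 2].any fun k => (b.all fun d => !(Nat.beq (c.getD d 3) k)) && search bs (k :: c)

/-- Reversed prefix of a coloring. -/
def pre (col : ℕ → ℕ) : ℕ → List ℕ
  | 0 => []
  | n + 1 => col n :: pre col n

theorem pre_getD (col : ℕ → ℕ) (n d : ℕ) (h : d < n) :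
    (pre col n).getD d 3 = col (n - 1 - d) := by
  induction n generalizing d with
  | zero => omega
  | succ n ih =>
    cases d with
    | zero => simp [pre]
    | succ d =>
      have := ih d (by omega)
      simp only [pre, List.getD_cons_succ]
      rw [this]
      congr 1
      omega

theorem search_sound (col : ℕ → ℕ) (h3 : ∀ n, col n < 3) (bs : List (List ℕ)) (n : ℕ)
    (hb : ∀ (i : ℕ) (hi : i < bs.length), ∀ d ∈ bs[i], d < n + i ∧
      col (n + i - 1 - d) ≠ col (n + i)) :
    search bs (pre col n) = true := by
  induction bs generalizing n with
  | nil => rfl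
  | cons b bs ih =>
    rw [search, List.any_eq_true]
    refine ⟨col n, ?_, ?_⟩
    · have := h3 n
      simp only [List.mem_cons, List.not_mem_nil, or_false]
      omega
    · rw [Bool.and_eq_true, List.all_eq_true]
      constructor
      · intro d hd
        have := hb 0 (by simp) d hd
        rw [pre_getD _ _ _ (by omega)]
        have hne : col (n - 1 - d) ≠ col n := this.2
        rw [Bool.not_eq_true', Bool.eq_false_iff]
        exact fun h => hne (Nat.eq_of_beq_eq_true h)
      · refine ih (n + 1) ?_
        intro i hi d hd
        have := hb (i + 1) (by simpa using hi) d (by simpa using hd)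
        rw [show n + 1 + i = n + (i + 1) by omega]
        exact this

theorem search_false : search back [] = false := by decide +kernel

theorem not_colorable_three : ¬ G.Colorable 3 := by
  rintro ⟨C⟩
  let col : ℕ → ℕ := fun n => if h : n < 22 then (C ⟨n, h⟩).val else 0
  have h := search_sound col (fun n => by
    simp only [col]; split
    · exact (C _).isLt
    · omega) back 0 ?_
  · rw [show pre col 0 = [] from rfl, search_false] at h
    exact Bool.noConfusion h
  · have key : ∀ i : Fin 22, ∀ d ∈ back.getD i.val [], d < i.val ∧
        ∃ j : Fin 22, j.val = i.val - 1 - d ∧ adjB j i = true := by decide +kernel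
    intro i hi d hd
    have hi' : i < 22 := hi
    obtain ⟨h1, j, hj, hadj⟩ := key ⟨i, hi'⟩ d (by
      rw [List.getD_eq_getElem _ _ hi]; exact hd)
    simp only at h1 hj
    refine ⟨by omega, ?_⟩
    have hv : C j ≠ C ⟨i, hi'⟩ := C.valid hadj
    rw [show 0 + i - 1 - d = j.val by omega, Nat.zero_add]
    simp only [col, j.isLt, hi', dif_pos]
    exact fun h => hv (Fin.ext h)

theorem pathDecomp_four : HasPathDecompOfWidth G 4 := by
  refine ⟨18, ![{0, 1, 2, 3, 4}, {0, 1, 2, 3, 5}, {1, 2, 3, 5, 6}, {1, 2, 3, 5, 7},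
    {2, 3, 5, 7, 8}, {3, 5, 7, 8, 9}, {5, 7, 8, 9, 10}, {5, 7, 8, 10, 11}, {7, 8, 10, 11, 12},
    {8, 10, 11, 12, 13}, {8, 10, 11, 12, 14}, {10, 11, 12, 14, 15}, {10, 12, 14, 15, 16},
    {10, 12, 14, 15, 17}, {10, 12, 15, 17, 18}, {12, 15, 17, 18, 19}, {12, 15, 17, 18, 20},
    {15, 17, 18, 20, 21}], ?_, ?_, ?_, ?_⟩
  · decide +kernel
  · decide +kernel
  · decide +kernel
  · decide +kernel

/-- Convex predicates on indices. -/
def Conv {m : ℕ} (P : Fin m → Prop) : Prop := ∀ i j l, i ≤ j → j ≤ l → P i → P l → P j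

theorem Conv.union {m : ℕ} {P Q : Fin m → Prop} (hP : Conv P) (hQ : Conv Q)
    (h : ∃ i, P i ∧ Q i) : Conv (fun i => P i ∨ Q i) := by
  obtain ⟨t, hp, hq⟩ := h
  intro i j l hij hjl hi hl
  rcases le_total j t with hjt | hjt
  · rcases hi with hi | hi
    · exact Or.inl (hP i j t hij hjt hi hp)
    · exact Or.inr (hQ i j t hij hjt hi hq)
  · rcases hl with hl | hl
    · exact Or.inl (hP t j l hjt hjl hp hl)
    · exact Or.inr (hQ t j l hjt hjl hq hl)

/-- Helly property of intervals. -/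
theorem helly {m : ℕ} (P : Fin 5 → Fin m → Prop) (hc : ∀ k, Conv (P k))
    (hp : ∀ k l, ∃ i, P k i ∧ P l i) : ∃ t, ∀ k, P k t := by
  have hmin : ∀ k, ∃ a, P k a ∧ ∀ x, P k x → a ≤ x := by
    intro k
    obtain ⟨i, hi, -⟩ := hp k k
    obtain ⟨a, ha, hmin⟩ := WellFounded.has_min (wellFounded_lt (α := Fin m)) {i | P k i} ⟨i, hi⟩
    exact ⟨a, ha, fun x hx => not_lt.mp (hmin x hx)⟩
  choose a ha hle using hmin
  obtain ⟨k0, hk0⟩ := Finite.exists_max a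
  refine ⟨a k0, fun k => ?_⟩
  obtain ⟨x, hx, hx0⟩ := hp k k0
  exact hc k (a k) (a k0) x (hk0 k) (hle k0 x hx0) (ha k) hx

/-- The branch sets of a `K₅` minor. -/
def part (k : Fin 5) : Fin 22 → Bool := fun v =>
  (![[10, 18], [13, 12, 20], [14, 16], [17, 19], [15, 21]] k : List (Fin 22)).contains v

theorem not_pathDecomp_three : ¬ HasPathDecompOfWidth G 3 := by
  rintro ⟨m, Bag, hv, he, hc, hcard⟩
  have hc' : ∀ v, Conv (fun i => v ∈ Bag i) := fun v i j l => hc v i j l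
  have hconn : ∀ k : Fin 5, ∃ b a c : Fin 22, adjB a b = true ∧ adjB b c = true ∧
      ∀ v, part k v = true ↔ (v = a ∨ v = b) ∨ v = c := by decide +kernel
  have hpair : ∀ k l : Fin 5, k ≠ l → ∃ u v : Fin 22, part k u = true ∧ part l v = true ∧
      adjB u v = true := by decide +kernel
  have hdisj : ∀ k l : Fin 5, ∀ v, part k v = true → part l v = true → k = l := by
    decide +kernel
  have hH := helly (fun k i => ∃ v, part k v = true ∧ v ∈ Bag i) ?_ ?_
  · obtain ⟨t, ht⟩ := hH
    choose f hf hfB using ht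
    have hinj : Function.Injective f := fun k l h => hdisj k l (f k) (hf k) (h ▸ hf l)
    have h5 : (Finset.univ.image f).card = 5 := by
      rw [Finset.card_image_of_injective _ hinj]; simp
    have hsub : Finset.univ.image f ⊆ Bag t := by
      intro v hv
      obtain ⟨k, -, rfl⟩ := Finset.mem_image.mp hv
      exact hfB k
    have := Finset.card_le_card hsub
    have := hcard t
    omega
  · intro k
    obtain ⟨b, a, c, hab, hbc, hk⟩ := hconn k
    have hu := ((hc' a).union (hc' b) (he a b hab)).union (hc' c)
      (by obtain ⟨i, h1, h2⟩ := he b c hbc; exact ⟨i, Or.inr h1, h2⟩)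
    have heq : (fun i => ∃ v, part k v = true ∧ v ∈ Bag i) =
        fun i => (a ∈ Bag i ∨ b ∈ Bag i) ∨ c ∈ Bag i := by
      funext i
      apply propext
      constructor
      · rintro ⟨v, hv, hi⟩
        rcases (hk v).mp hv with (rfl | rfl) | rfl
        · exact Or.inl (Or.inl hi)
        · exact Or.inl (Or.inr hi)
        · exact Or.inr hi
      · rintro ((h | h) | h)
        · exact ⟨a, (hk a).mpr (by simp), h⟩
        · exact ⟨b, (hk b).mpr (by simp), h⟩
        · exact ⟨c, (hk c).mpr (by simp), h⟩
    rw [heq]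
    exact hu
  · intro k l
    by_cases hkl : k = l
    · subst hkl
      obtain ⟨b, a, c, hab, hbc, hk⟩ := hconn k
      obtain ⟨i, hi⟩ := hv a
      exact ⟨i, ⟨a, (hk a).mpr (by simp), hi⟩, ⟨a, (hk a).mpr (by simp), hi⟩⟩
    · obtain ⟨u, v, hu, hv', huv⟩ := hpair k l hkl
      obtain ⟨i, h1, h2⟩ := he u v huv
      exact ⟨i, ⟨u, hu, h1⟩, ⟨v, hv', h2⟩⟩

end Stmt13


/-- There exists a finite simple triangle-free graph with exactly 22 vertices that has
maximum degree 4 (every vertex has at most 4 neighbors, and some vertex has exactly 4),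
chromatic number 4, admits a path decomposition of width at most 4, and admits no path
decomposition of width at most 3 (i.e., it has pathwidth exactly 4). -/
theorem stmt_13 :
    ∃ G : SimpleGraph (Fin 22),
      G.CliqueFree 3 ∧
      (∀ v, (G.neighborSet v).ncard ≤ 4) ∧ (∃ v, (G.neighborSet v).ncard = 4) ∧
      G.chromaticNumber = 4 ∧
      HasPathDecompOfWidth G 4 ∧ ¬ HasPathDecompOfWidth G 3 := by
  refine ⟨Stmt13.G, Stmt13.cliqueFree, ?_, ?_, ?_, Stmt13.pathDecomp_four,
    Stmt13.not_pathDecomp_three⟩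
  · intro v
    rw [Stmt13.ncard_eq]
    revert v
    decide +kernel
  · refine ⟨2, ?_⟩
    rw [Stmt13.ncard_eq]
    decide +kernel
  · exact SimpleGraph.chromaticNumber_eq_iff_colorable_not_colorable.mpr
      ⟨Stmt13.colorable_four, Stmt13.not_colorable_three⟩
end
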